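/- There exists an absolute constant c > 0 such that for every vector field v ∈ L^∞(−1,0; L²(B(1))) whose weak spatial gradient satisfies ∇v ∈ L²(Q(1)), every 0 < r ≤ 1 and every 0 < θ ≤ 1, one has G(θr) ≤ c ( θ^{−1} E(r) + θ² A(r) ). -/

import Mathlib

/- Setting: suitable weak solutions of the 3D incompressible Navier–Stokes equations,
   following Caffarelli–Kohn–Nirenberg.  The velocity field is `v`, its weak spatial
   gradient is `dv`, the pressure is `p` and the force is `f`. -/

open MeasureTheory Filter Metric Set Bornology
open scoped Topology ENNReal

noncomputable section

/-- Three dimensional Euclidean space. -/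
abbrev V3 : Type := EuclideanSpace ℝ (Fin 3)

/-- The standard basis of `V3`. -/
def e3 (i : Fin 3) : V3 := EuclideanSpace.single i 1

/-- Euclidean dot product. -/
def dot3 (a b : V3) : ℝ := ∑ i, a i * b i

/-- Squared Frobenius norm of a (gradient) matrix. -/
def fnormSq (A : V3 →L[ℝ] V3) : ℝ := ∑ i, ‖A (e3 i)‖ ^ 2

/-- Frobenius norm of a (gradient) matrix. -/
def fnorm (A : V3 →L[ℝ] V3) : ℝ := Real.sqrt (fnormSq A)

/-- Frobenius inner product of two (gradient) matrices. -/
def fdot (A B : V3 →L[ℝ] V3) : ℝ := ∑ i, dot3 (A (e3 i)) (B (e3 i))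

/-- Laplacian of a scalar function on `V3`. -/
def lap3 (φ : V3 → ℝ) (x : V3) : ℝ :=
  ∑ i, fderiv ℝ (fun y => fderiv ℝ φ y (e3 i)) x (e3 i)

/-- Smooth compactly supported scalar test function on a spatial domain. -/
def IsSpaceTest (U : Set V3) (φ : V3 → ℝ) : Prop :=
  ContDiff ℝ (⊤ : ℕ∞) φ ∧ HasCompactSupport φ ∧ tsupport φ ⊆ U

/-- Smooth compactly supported scalar test function on a space-time domain. -/
def IsTimeSpaceTest (U : Set V3) (I : Set ℝ) (φ : V3 → ℝ → ℝ) : Prop :=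
  ContDiff ℝ (⊤ : ℕ∞) (fun z : V3 × ℝ => φ z.1 z.2) ∧
  HasCompactSupport (fun z : V3 × ℝ => φ z.1 z.2) ∧
  tsupport (fun z : V3 × ℝ => φ z.1 z.2) ⊆ U ×ˢ I

/-- Smooth compactly supported vector test field on a space-time domain. -/
def IsVectorTest (U : Set V3) (I : Set ℝ) (ψ : V3 → ℝ → V3) : Prop :=
  ContDiff ℝ (⊤ : ℕ∞) (fun z : V3 × ℝ => ψ z.1 z.2) ∧
  HasCompactSupport (fun z : V3 × ℝ => ψ z.1 z.2) ∧
  tsupport (fun z : V3 × ℝ => ψ z.1 z.2) ⊆ U ×ˢ I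

/-- `Ω` has a `C²` boundary: near every boundary point, `Ω` is the sublevel set of a
`C²` function with nonvanishing gradient. -/
def HasC2Boundary (Ω : Set V3) : Prop :=
  ∀ x ∈ frontier Ω, ∃ (U : Set V3) (g : V3 → ℝ), IsOpen U ∧ x ∈ U ∧
    ContDiff ℝ 2 g ∧ (∀ y ∈ U, fderiv ℝ g y ≠ 0) ∧ Ω ∩ U = {y ∈ U | g y < 0}

/-- `dv` is the weak spatial gradient of `v` on `U × I`. -/
def IsWeakSpatialGradient (U : Set V3) (I : Set ℝ) (v : V3 → ℝ → V3)
    (dv : V3 → ℝ → V3 →L[ℝ] V3) : Prop :=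
  ∀ᵐ t ∂(volume.restrict I), ∀ φ : V3 → ℝ, IsSpaceTest U φ → ∀ u : V3,
    (∫ x in U, φ x • dv x t u) = - ∫ x in U, fderiv ℝ φ x u • v x t

/-- `(v, p)` is a suitable weak solution of the Navier–Stokes system with force `f` on
`Ω × (a, b)`, where `Ω ⊆ ℝ³` is a bounded `C²` domain; `dv` denotes the weak spatial
gradient of `v`. -/
structure IsSuitableWeakSolution (Ω : Set V3) (a b : ℝ) (v : V3 → ℝ → V3)
    (dv : V3 → ℝ → V3 →L[ℝ] V3) (p : V3 → ℝ → ℝ) (f : V3 → ℝ → V3) : Prop where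
  open_dom : IsOpen Ω
  bounded_dom : IsBounded Ω
  nonempty_dom : Ω.Nonempty
  c2_boundary : HasC2Boundary Ω
  time_lt : a < b
  meas_v : AEMeasurable (fun z : V3 × ℝ => v z.1 z.2) (volume.restrict (Ω ×ˢ Ioo a b))
  meas_dv : AEMeasurable (fun z : V3 × ℝ => dv z.1 z.2) (volume.restrict (Ω ×ˢ Ioo a b))
  meas_p : AEMeasurable (fun z : V3 × ℝ => p z.1 z.2) (volume.restrict (Ω ×ˢ Ioo a b))
  meas_f : AEMeasurable (fun z : V3 × ℝ => f z.1 z.2) (volume.restrict (Ω ×ˢ Ioo a b))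
  /-- `v ∈ L^∞(a,b; L²(Ω))`. -/
  v_linf_l2 : ∃ K : ℝ, ∀ᵐ t ∂(volume.restrict (Ioo a b)),
    IntegrableOn (fun x => ‖v x t‖ ^ 2) Ω volume ∧ (∫ x in Ω, ‖v x t‖ ^ 2) ≤ K
  /-- `∇v ∈ L²(Ω × (a,b))`. -/
  dv_l2 : IntegrableOn (fun z : V3 × ℝ => fnormSq (dv z.1 z.2)) (Ω ×ˢ Ioo a b) volume
  /-- `p ∈ L^{3/2}(Ω × (a,b))`. -/
  p_l32 : IntegrableOn (fun z : V3 × ℝ => |p z.1 z.2| ^ ((3:ℝ)/2)) (Ω ×ˢ Ioo a b) volume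
  /-- `f ∈ L^m(Ω × (a,b))` for some `m > 5/2`. -/
  f_lm : ∃ m : ℝ, 5/2 < m ∧
    IntegrableOn (fun z : V3 × ℝ => ‖f z.1 z.2‖ ^ m) (Ω ×ˢ Ioo a b) volume
  /-- `dv` is the weak spatial gradient of `v`. -/
  weak_gradient : IsWeakSpatialGradient Ω (Ioo a b) v dv
  /-- `v` is divergence free in the sense of distributions. -/
  div_free : ∀ᵐ t ∂(volume.restrict (Ioo a b)), ∀ φ : V3 → ℝ, IsSpaceTest Ω φ →
    (∫ x in Ω, fderiv ℝ φ x (v x t)) = 0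
  /-- The Navier–Stokes equations hold in the sense of distributions. -/
  nse : ∀ ψ : V3 → ℝ → V3, IsVectorTest Ω (Ioo a b) ψ →
    (∫ t in Ioo a b, ∫ x in Ω,
      (dot3 (v x t) (deriv (fun s => ψ x s) t)
        - fdot (dv x t) (fderiv ℝ (fun y => ψ y t) x)
        - dot3 (dv x t (v x t)) (ψ x t)
        + p x t * (∑ i, fderiv ℝ (fun y => ψ y t) x (e3 i) i)
        + dot3 (f x t) (ψ x t))) = 0
  /-- The generalized local energy inequality. -/
  energy : ∀ᵐ t ∂(volume.restrict (Ioo a b)), ∀ φ : V3 → ℝ → ℝ,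
    IsTimeSpaceTest Ω (Ioo a b) φ → (∀ x s, 0 ≤ φ x s) →
    (∫ x in Ω, ‖v x t‖ ^ 2 * φ x t)
        + 2 * ∫ s in Ioo a t, ∫ x in Ω, fnormSq (dv x s) * φ x s
      ≤ (∫ s in Ioo a t, ∫ x in Ω,
            ‖v x s‖ ^ 2 * (deriv (fun τ => φ x τ) s + lap3 (fun y => φ y s) x))
        + (∫ s in Ioo a t, ∫ x in Ω, ‖v x s‖ ^ 2 * fderiv ℝ (fun y => φ y s) x (v x s))
        + 2 * (∫ s in Ioo a t, ∫ x in Ω, p x s * fderiv ℝ (fun y => φ y s) x (v x s))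
        + 2 * (∫ s in Ioo a t, ∫ x in Ω, dot3 (f x s) (v x s) * φ x s)

/-- `E_q(z,r) = r^{-5+2q} ∬_{Q(z,r)} |∇v|^q`, centered at `z = (x₀,t₀)`. -/
def funEq (dv : V3 → ℝ → V3 →L[ℝ] V3) (q : ℝ) (z : V3 × ℝ) (r : ℝ) : ℝ :=
  r ^ (2 * q - 5) * ∫ t in Ioo (z.2 - r ^ 2) z.2, ∫ x in ball z.1 r, fnorm (dv x t) ^ q

/-- `E(z,r) = r⁻¹ ∬_{Q(z,r)} |∇v|²`, centered at `z = (x₀,t₀)`. -/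
def funE2 (dv : V3 → ℝ → V3 →L[ℝ] V3) (z : V3 × ℝ) (r : ℝ) : ℝ :=
  r⁻¹ * ∫ t in Ioo (z.2 - r ^ 2) z.2, ∫ x in ball z.1 r, fnormSq (dv x t)

/-- `z` is a regular point of `v`: `v` is essentially bounded on some parabolic
cylinder `Q(z,ρ)`. -/
def RegularPoint (v : V3 → ℝ → V3) (z : V3 × ℝ) : Prop :=
  ∃ ρ : ℝ, 0 < ρ ∧ ∃ K : ℝ,
    ∀ᵐ w : V3 × ℝ ∂(volume.restrict (ball z.1 ρ ×ˢ Ioo (z.2 - ρ ^ 2) z.2)),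
      ‖v w.1 w.2‖ ≤ K

/- Scaled functionals centered at the reference point `z = (0,0)`. -/

/-- `A(r) = r⁻¹ sup_{-r²<s<0} ∫_{B(r)} |v|²`. -/
def funA (v : V3 → ℝ → V3) (r : ℝ) : ℝ :=
  r⁻¹ * sSup ((fun s => ∫ x in ball (0 : V3) r, ‖v x s‖ ^ 2) '' Ioo (-r ^ 2) 0)

/-- `E(r) = r⁻¹ ∬_{Q(r)} |∇v|²`. -/
def funE (dv : V3 → ℝ → V3 →L[ℝ] V3) (r : ℝ) : ℝ :=
  r⁻¹ * ∫ t in Ioo (-r ^ 2) 0, ∫ x in ball (0 : V3) r, fnormSq (dv x t)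

/-- `E_q(r) = r^{-5+2q} ∬_{Q(r)} |∇v|^q`. -/
def funEqz (dv : V3 → ℝ → V3 →L[ℝ] V3) (q r : ℝ) : ℝ :=
  r ^ (2 * q - 5) * ∫ t in Ioo (-r ^ 2) 0, ∫ x in ball (0 : V3) r, fnorm (dv x t) ^ q

/-- `C(r) = r⁻² ∬_{Q(r)} |v|³`. -/
def funC (v : V3 → ℝ → V3) (r : ℝ) : ℝ :=
  r ^ (-2 : ℝ) * ∫ t in Ioo (-r ^ 2) 0, ∫ x in ball (0 : V3) r, ‖v x t‖ ^ 3

/-- `D(r) = r⁻² ∬_{Q(r)} |p - ⟨p⟩_{B(r)}|^{3/2}`. -/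
def funD (p : V3 → ℝ → ℝ) (r : ℝ) : ℝ :=
  r ^ (-2 : ℝ) * ∫ t in Ioo (-r ^ 2) 0, ∫ x in ball (0 : V3) r,
    |p x t - ⨍ y in ball (0 : V3) r, p y t| ^ ((3:ℝ)/2)

/-- `C̃(r) = r⁻² ∬_{Q(r)} |v - ⟨v⟩_{B(r)}|³`. -/
def funCt (v : V3 → ℝ → V3) (r : ℝ) : ℝ :=
  r ^ (-2 : ℝ) * ∫ t in Ioo (-r ^ 2) 0, ∫ x in ball (0 : V3) r,
    ‖v x t - ⨍ y in ball (0 : V3) r, v y t‖ ^ 3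

/-- `G(r) = r⁻¹ ∫_{-r²}^0 (∫_{B(r)} |v|⁶)^{1/3}`. -/
def funG (v : V3 → ℝ → V3) (r : ℝ) : ℝ :=
  r⁻¹ * ∫ t in Ioo (-r ^ 2) 0, (∫ x in ball (0 : V3) r, ‖v x t‖ ^ 6) ^ ((1:ℝ)/3)

/-- `P(r) = r⁻² inf_{c∈ℝ} ( ∫_{-r²}^0 (∫_{B(r)} |p - c|³)^{1/3} )²`. -/
def funP (p : V3 → ℝ → ℝ) (r : ℝ) : ℝ :=
  r ^ (-2 : ℝ) * ⨅ c : ℝ,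
    (∫ t in Ioo (-r ^ 2) 0, (∫ x in ball (0 : V3) r, |p x t - c| ^ 3) ^ ((1:ℝ)/3)) ^ 2

/-- `F(r) = ( ∫_{-r²}^0 (∫_{B(r)} |f|²)^{2/3} )^{3/2}`. -/
def funF (f : V3 → ℝ → V3) (r : ℝ) : ℝ :=
  (∫ t in Ioo (-r ^ 2) 0, (∫ x in ball (0 : V3) r, ‖f x t‖ ^ 2) ^ ((2:ℝ)/3)) ^ ((3:ℝ)/2)

/-!
On a ball, the radial identity `div (φ x) = n φ + ∇φ · x` with a radial cutoff gives the Sobolev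
inequality in `W^{1,1}`, and applying it to `|u|^γ` gives `W^{1,p}` for `p < n`. The Poincaré
inequality bounds the oscillation of `u` by `∇u`, and the remaining constant has `L^q` norm on
`B(θR)` smaller than on `B(R)` by the factor `θ^{n/q}`; this is the source of the powers of `θ`.
Mollification extends the estimate to weak derivatives. With `n = 3`, `p = 2`, `q = 6`, its square
on a time slice reads `‖v‖₆² ≤ C (‖∇v‖₂² + θ R⁻² ‖v‖₂²)`, where the norm on the left is over
`B(θR)` and the others are over `B(R)`; integrating over `(-(θR)², 0)` gives the result.
-/

open scoped NNReal

section Exhaustion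

variable {X : Type*} [PseudoMetricSpace X] [MeasurableSpace X] [OpensMeasurableSpace X]
  {F : Type*} [NormedAddCommGroup F]

theorem eLpNorm_restrict_ball_le_of_eventually_le {μ : Measure X} {f : X → F} {x : X} {b : ℝ}
    {p M : ℝ≥0∞} (hf : AEStronglyMeasurable f (μ.restrict (ball x b)))
    (h : ∀ᶠ a in 𝓝[<] b, eLpNorm f p (μ.restrict (ball x a)) ≤ M) :
    eLpNorm f p (μ.restrict (ball x b)) ≤ M := by
  obtain ⟨a, -, ha, hlim⟩ := exists_seq_strictMono_tendsto' (sub_one_lt b)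
  have hlim' : Tendsto a atTop (𝓝[<] b) :=
    tendsto_nhdsWithin_iff.2 ⟨hlim, Eventually.of_forall fun n => (ha n).2⟩
  have hball (n : ℕ) : (μ.restrict (ball x b)).restrict (ball x (a n)) =
      μ.restrict (ball x (a n)) :=
    Measure.restrict_restrict_of_subset (ball_subset_ball (ha n).2.le)
  refine (Lp.eLpNorm_lim_le_liminf_eLpNorm (f := fun n => (ball x (a n)).indicator f)
    (fun n => hf.indicator measurableSet_ball) f ?_).trans
    (liminf_le_of_frequently_le' (hlim'.eventually h).frequently |>.trans' ?_)
  · filter_upwards [ae_restrict_mem measurableSet_ball] with y hy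
    refine tendsto_const_nhds.congr' ?_
    filter_upwards [hlim.eventually_const_lt (mem_ball.1 hy)] with n hn
    exact (indicator_of_mem (mem_ball.2 hn) f).symm
  · simp only [eLpNorm_indicator_eq_eLpNorm_restrict measurableSet_ball, hball, le_refl]

end Exhaustion

theorem integral_fderiv_apply_self {E : Type*} [NormedAddCommGroup E] [NormedSpace ℝ E]
    [FiniteDimensional ℝ E] [MeasurableSpace E] [BorelSpace E] (μ : Measure E) [μ.IsAddHaarMeasure]
    {g : E → ℝ} (hg : ContDiff ℝ 1 g) (hgs : HasCompactSupport g) :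
    ∫ x, fderiv ℝ g x x ∂μ = -(Module.finrank ℝ E * ∫ x, g x ∂μ) := by
  have : Continuous (fderiv ℝ g) := hg.continuous_fderiv one_ne_zero
  let b := Module.finBasis ℝ E
  let coord (i : Fin (Module.finrank ℝ E)) : E →L[ℝ] ℝ := (b.coord i).toContinuousLinearMap
  have hint (i) : Integrable (fun x => coord i x * fderiv ℝ g x (b i)) μ :=
    Continuous.integrable_of_hasCompactSupport (by fun_prop)
      ((hgs.fderiv_apply ℝ (b i)).mul_left)
  have hcoord (i) : ∫ x, coord i x * fderiv ℝ g x (b i) ∂μ = -∫ x, g x ∂μ := by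
    have hone (x : E) : fderiv ℝ (coord i) x (b i) = 1 := by
      rw [(coord i).fderiv]
      simp [coord]
    rw [integral_mul_fderiv_eq_neg_fderiv_mul_of_integrable _ (hint i) _
      (fun x _ => (coord i).differentiableAt) fun x _ => hg.differentiable one_ne_zero x]
    · simp only [hone, one_mul]
    · simpa only [hone, one_mul] using hg.continuous.integrable_of_hasCompactSupport hgs
    · exact ((coord i).continuous.mul hg.continuous).integrable_of_hasCompactSupport hgs.mul_left
  have hsum (x : E) : fderiv ℝ g x x = ∑ i, coord i x * fderiv ℝ g x (b i) := by
    calc fderiv ℝ g x x = fderiv ℝ g x (∑ i, coord i x • b i) := by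
          exact congrArg _ (b.sum_repr x).symm
      _ = ∑ i, coord i x * fderiv ℝ g x (b i) := by simp only [map_sum, map_smul, smul_eq_mul]
  simp only [hsum, integral_finsetSum _ fun i _ => hint i, hcoord, Finset.sum_const,
    Finset.card_univ, Fintype.card_fin, nsmul_eq_mul, mul_neg]

theorem integral_mul_neg_fderiv_apply_self {E : Type*} [NormedAddCommGroup E] [NormedSpace ℝ E]
    [FiniteDimensional ℝ E] [MeasurableSpace E] [BorelSpace E] (μ : Measure E) [μ.IsAddHaarMeasure]
    {h ψ : E → ℝ} (hh : ContDiff ℝ 1 h) (hψ : ContDiff ℝ 1 ψ) (hψs : HasCompactSupport ψ) :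
    ∫ x, h x * -fderiv ℝ ψ x x ∂μ =
      ∫ x, ψ x * (fderiv ℝ h x x + Module.finrank ℝ E * h x) ∂μ := by
  have : Continuous (fderiv ℝ h) := hh.continuous_fderiv one_ne_zero
  have hhc : Continuous h := hh.continuous
  have hψc : Continuous ψ := hψ.continuous
  have hleib (x : E) : h x * -fderiv ℝ ψ x x =
      ψ x * fderiv ℝ h x x - fderiv ℝ (fun y => h y * ψ y) x x := by
    simp [fderiv_fun_mul (hh.differentiable one_ne_zero x) (hψ.differentiable one_ne_zero x)]
  have hint₁ : Integrable (fun x => ψ x * fderiv ℝ h x x) μ :=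
    (by fun_prop : Continuous _).integrable_of_hasCompactSupport hψs.mul_right
  have hint₂ : Integrable (fun x => h x * ψ x) μ :=
    (hhc.mul hψc).integrable_of_hasCompactSupport hψs.mul_left
  have hint₃ : Integrable (fun x => fderiv ℝ (fun y => h y * ψ y) x x) μ := by
    refine (((hh.mul hψ).continuous_fderiv one_ne_zero).clm_apply
      continuous_id).integrable_of_hasCompactSupport
        ((hψs.mul_left (f := h)).fderiv ℝ |>.mono' fun x hx => ?_)
    exact subset_tsupport _ fun hx0 => hx (DFunLike.congr_fun hx0 x)
  calc ∫ x, h x * -fderiv ℝ ψ x x ∂μ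
      = ∫ x, ψ x * fderiv ℝ h x x ∂μ - ∫ x, fderiv ℝ (fun y => h y * ψ y) x x ∂μ := by
        simp only [hleib, integral_sub hint₁ hint₃]
    _ = ∫ x, ψ x * fderiv ℝ h x x ∂μ + Module.finrank ℝ E * ∫ x, h x * ψ x ∂μ := by
        rw [integral_fderiv_apply_self μ (hh.mul hψ) hψs.mul_left, sub_neg_eq_add]
    _ = ∫ x, ψ x * (fderiv ℝ h x x + Module.finrank ℝ E * h x) ∂μ := by
        rw [← integral_const_mul, ← integral_add hint₁ (hint₂.const_mul _)]
        congr! 2 with x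
        ring

theorem integrableOn_ball_of_continuous {X F : Type*} [MetricSpace X] [ProperSpace X]
    [MeasurableSpace X] [OpensMeasurableSpace X] {μ : Measure X} [IsFiniteMeasureOnCompacts μ]
    [NormedAddCommGroup F] {f : X → F} (hf : Continuous f) (x : X) (r : ℝ) :
    IntegrableOn f (ball x r) μ :=
  (hf.continuousOn.integrableOn_compact (isCompact_closedBall x r)).mono_set ball_subset_closedBall

section Cutoff

variable {E : Type*} [NormedAddCommGroup E] {a b : ℝ}

/-- A smooth radial cutoff: `1` on `ball 0 a`, `0` off `ball 0 b`, and a nonincreasing function of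
`‖x‖`. -/
def radialCutoff (a b : ℝ) (x : E) : ℝ :=
  Real.smoothTransition ((b ^ 2 - ‖x‖ ^ 2) / (b ^ 2 - a ^ 2))

theorem radialCutoff_nonneg (x : E) : 0 ≤ radialCutoff a b x := Real.smoothTransition.nonneg _

theorem radialCutoff_le_one (x : E) : radialCutoff a b x ≤ 1 := Real.smoothTransition.le_one _

theorem radialCutoff_of_mem_ball (ha : 0 < a) (hab : a < b) {x : E} (hx : x ∈ ball 0 a) :
    radialCutoff a b x = 1 := by
  have hxa : ‖x‖ < a := mem_ball_zero_iff.1 hx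
  refine Real.smoothTransition.one_of_one_le ((one_le_div ?_).2 ?_) <;>
    nlinarith [norm_nonneg x]

theorem radialCutoff_of_notMem_ball (ha : 0 < a) (hab : a < b) {x : E} (hx : x ∉ ball 0 b) :
    radialCutoff a b x = 0 := by
  have hbx : b ≤ ‖x‖ := by simpa using hx
  refine Real.smoothTransition.zero_of_nonpos (div_nonpos_of_nonpos_of_nonneg ?_ ?_) <;> nlinarith

theorem hasCompactSupport_radialCutoff [ProperSpace E] (ha : 0 < a) (hab : a < b) :
    HasCompactSupport (radialCutoff a b : E → ℝ) :=
  .of_support_subset_isCompact (isCompact_closedBall 0 b) fun x hx => ball_subset_closedBall <| by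
    by_contra h
    exact hx (radialCutoff_of_notMem_ball ha hab h)

variable [InnerProductSpace ℝ E]

theorem contDiff_radialCutoff : ContDiff ℝ 1 (radialCutoff a b : E → ℝ) :=
  Real.smoothTransition.contDiff.comp
    ((contDiff_const.sub (contDiff_norm_sq ℝ)).div_const _)

theorem mul_norm_fderiv_radialCutoff_le (ha : 0 < a) (hab : a < b) (x : E) :
    a * ‖fderiv ℝ (radialCutoff a b) x‖ ≤ -fderiv ℝ (radialCutoff a b) x x := by
  rcases lt_or_ge ‖x‖ a with hx | hx
  · have hloc : radialCutoff a b =ᶠ[𝓝 x] fun _ => (1 : ℝ) :=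
      eventually_of_mem (isOpen_ball.mem_nhds (mem_ball_zero_iff.2 hx)) fun y hy =>
        radialCutoff_of_mem_ball ha hab hy
    simp [hloc.fderiv_eq]
  have hd : 0 < b ^ 2 - a ^ 2 := by nlinarith
  let q (y : E) : ℝ := (b ^ 2 - ‖y‖ ^ 2) / (b ^ 2 - a ^ 2)
  have hq : HasFDerivAt q ((b ^ 2 - a ^ 2)⁻¹ • -((2 : ℕ) • innerSL ℝ x) : E →L[ℝ] ℝ) x := by
    simpa only [q, div_eq_inv_mul, smul_eq_mul] using
      ((hasStrictFDerivAt_norm_sq x).hasFDerivAt.const_sub (b ^ 2)).const_mul (b ^ 2 - a ^ 2)⁻¹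
  obtain ⟨c, hc, hfd⟩ : ∃ c : ℝ, 0 ≤ c ∧ fderiv ℝ (radialCutoff a b) x = -(c • innerSL ℝ x) := by
    have hs : DifferentiableAt ℝ Real.smoothTransition (q x) :=
      (Real.smoothTransition.contDiff (n := 1)).differentiable one_ne_zero _
    have hs0 : 0 ≤ deriv Real.smoothTransition (q x) :=
      Real.smoothTransition.monotone.deriv_nonneg
    refine ⟨deriv Real.smoothTransition (q x) * ((b ^ 2 - a ^ 2)⁻¹ * 2), by positivity, ?_⟩
    refine (hs.hasDerivAt.comp_hasFDerivAt x hq).fderiv.trans ?_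
    module
  calc a * ‖fderiv ℝ (radialCutoff a b) x‖ = c * (a * ‖x‖) := by
        rw [hfd, norm_neg, norm_smul, innerSL_apply_norm, Real.norm_of_nonneg hc]; ring
    _ ≤ c * ‖x‖ ^ 2 := by rw [sq]; gcongr
    _ = -fderiv ℝ (radialCutoff a b) x x := by
        simp [hfd]

end Cutoff

section SobolevOne

variable {E : Type*} [NormedAddCommGroup E] [InnerProductSpace ℝ E] [FiniteDimensional ℝ E]
  [MeasurableSpace E] [BorelSpace E] (μ : Measure E) [μ.IsAddHaarMeasure] {h : E → ℝ}

theorem integral_mul_norm_fderiv_radialCutoff_le (hh : ContDiff ℝ 1 h) (h0 : ∀ x, 0 ≤ h x)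
    {a b : ℝ} (ha : 0 < a) (hab : a < b) :
    ∫ x, h x * ‖fderiv ℝ (radialCutoff a b) x‖ ∂μ ≤
      a⁻¹ * ∫ x in ball 0 b, (b * ‖fderiv ℝ h x‖ + Module.finrank ℝ E * h x) ∂μ := by
  set ψ : E → ℝ := radialCutoff a b
  have hψ : ContDiff ℝ 1 ψ := contDiff_radialCutoff
  have hψs : HasCompactSupport ψ := hasCompactSupport_radialCutoff ha hab
  have : Continuous (fderiv ℝ h) := hh.continuous_fderiv one_ne_zero
  have hdψ : Continuous (fderiv ℝ ψ) := hψ.continuous_fderiv one_ne_zero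
  have hhc : Continuous h := hh.continuous
  have hvanish (x : E) (hx : x ∉ ball 0 b) :
      ψ x * (fderiv ℝ h x x + Module.finrank ℝ E * h x) = 0 := by
    simp [ψ, radialCutoff_of_notMem_ball ha hab hx]
  have hle (x : E) (hx : x ∈ ball 0 b) : ψ x * (fderiv ℝ h x x + Module.finrank ℝ E * h x) ≤
      b * ‖fderiv ℝ h x‖ + Module.finrank ℝ E * h x := by
    have hψ0 : 0 ≤ ψ x := radialCutoff_nonneg x
    have hψ1 : ψ x ≤ 1 := radialCutoff_le_one x
    have hdx : fderiv ℝ h x x ≤ b * ‖fderiv ℝ h x‖ := by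
      rw [mul_comm]
      exact (le_abs_self _).trans ((fderiv ℝ h x).le_opNorm_of_le (mem_ball_zero_iff.1 hx).le)
    have hhx := h0 x
    have hb : 0 < b := ha.trans hab
    calc ψ x * (fderiv ℝ h x x + Module.finrank ℝ E * h x)
        ≤ ψ x * (b * ‖fderiv ℝ h x‖ + Module.finrank ℝ E * h x) := by gcongr
      _ ≤ b * ‖fderiv ℝ h x‖ + Module.finrank ℝ E * h x :=
        mul_le_of_le_one_left (by positivity) hψ1
  calc ∫ x, h x * ‖fderiv ℝ ψ x‖ ∂μ
      ≤ ∫ x, a⁻¹ * (h x * -fderiv ℝ ψ x x) ∂μ := by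
        refine integral_mono ?_ ?_ fun x => ?_
        · exact (hhc.mul hdψ.norm).integrable_of_hasCompactSupport (hψs.fderiv ℝ).norm.mul_left
        · refine (by fun_prop : Continuous fun x => a⁻¹ * (h x * -fderiv ℝ ψ x x))
            |>.integrable_of_hasCompactSupport ((hψs.fderiv ℝ).mono' fun x hx => ?_)
          exact subset_tsupport _ fun hx0 => hx (by simp [hx0])
        · rw [← div_eq_inv_mul, le_div_iff₀ ha, mul_assoc, mul_comm _ a]
          exact mul_le_mul_of_nonneg_left (mul_norm_fderiv_radialCutoff_le ha hab x) (h0 x)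
    _ = a⁻¹ * ∫ x in ball 0 b, ψ x * (fderiv ℝ h x x + Module.finrank ℝ E * h x) ∂μ := by
        rw [integral_const_mul, integral_mul_neg_fderiv_apply_self μ hh hψ hψs,
          setIntegral_eq_integral_of_forall_compl_eq_zero hvanish]
    _ ≤ a⁻¹ * ∫ x in ball 0 b, (b * ‖fderiv ℝ h x‖ + Module.finrank ℝ E * h x) ∂μ := by
        refine mul_le_mul_of_nonneg_left ?_ (inv_nonneg.2 ha.le)
        have hint₁ : Continuous fun x => ψ x * (fderiv ℝ h x x + Module.finrank ℝ E * h x) :=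
          hψ.continuous.mul (by fun_prop)
        exact setIntegral_mono_on (integrableOn_ball_of_continuous hint₁ _ _)
          (integrableOn_ball_of_continuous (by fun_prop) _ _) measurableSet_ball hle

theorem integral_norm_fderiv_mul_radialCutoff_le (hh : ContDiff ℝ 1 h) (h0 : ∀ x, 0 ≤ h x)
    {a b : ℝ} (ha : 0 < a) (hab : a < b) :
    ∫ x, ‖fderiv ℝ (fun y => h y * radialCutoff a b y) x‖ ∂μ ≤
      ∫ x in ball 0 b,
        ((1 + a⁻¹ * b) * ‖fderiv ℝ h x‖ + a⁻¹ * Module.finrank ℝ E * h x) ∂μ := by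
  set ψ : E → ℝ := radialCutoff a b
  have hψ : ContDiff ℝ 1 ψ := contDiff_radialCutoff
  have hψs : HasCompactSupport ψ := hasCompactSupport_radialCutoff ha hab
  have hdh : Continuous (fderiv ℝ h) := hh.continuous_fderiv one_ne_zero
  have hdψ : Continuous (fderiv ℝ ψ) := hψ.continuous_fderiv one_ne_zero
  have hhc : Continuous h := hh.continuous
  have hleib (x : E) : ‖fderiv ℝ (fun y => h y * ψ y) x‖ ≤
      h x * ‖fderiv ℝ ψ x‖ + ψ x * ‖fderiv ℝ h x‖ := by
    rw [fderiv_fun_mul (hh.differentiable one_ne_zero x) (hψ.differentiable one_ne_zero x)]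
    refine (norm_add_le _ _).trans_eq ?_
    rw [norm_smul, norm_smul, Real.norm_of_nonneg (h0 x),
      Real.norm_of_nonneg (radialCutoff_nonneg x)]
  have hint₁ : Integrable (fun x => h x * ‖fderiv ℝ ψ x‖) μ :=
    (hhc.mul hdψ.norm).integrable_of_hasCompactSupport (hψs.fderiv ℝ).norm.mul_left
  have hint₂ : Integrable (fun x => ψ x * ‖fderiv ℝ h x‖) μ :=
    (hψ.continuous.mul hdh.norm).integrable_of_hasCompactSupport hψs.mul_right
  have hψdh : ∫ x, ψ x * ‖fderiv ℝ h x‖ ∂μ ≤ ∫ x in ball 0 b, ‖fderiv ℝ h x‖ ∂μ := by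
    rw [← setIntegral_eq_integral_of_forall_compl_eq_zero (s := ball 0 b) fun x hx => by
      simp [ψ, radialCutoff_of_notMem_ball ha hab hx]]
    exact setIntegral_mono_on hint₂.integrableOn
      (integrableOn_ball_of_continuous hdh.norm _ _) measurableSet_ball
      fun x _ => mul_le_of_le_one_left (norm_nonneg _) (radialCutoff_le_one x)
  calc ∫ x, ‖fderiv ℝ (fun y => h y * ψ y) x‖ ∂μ
      ≤ ∫ x, h x * ‖fderiv ℝ ψ x‖ ∂μ + ∫ x, ψ x * ‖fderiv ℝ h x‖ ∂μ := by
        rw [← integral_add hint₁ hint₂]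
        exact integral_mono_of_nonneg (.of_forall fun _ => norm_nonneg _) (hint₁.add hint₂)
          (.of_forall hleib)
    _ ≤ a⁻¹ * ∫ x in ball 0 b, (b * ‖fderiv ℝ h x‖ + Module.finrank ℝ E * h x) ∂μ +
          ∫ x in ball 0 b, ‖fderiv ℝ h x‖ ∂μ :=
        add_le_add (integral_mul_norm_fderiv_radialCutoff_le μ hh h0 ha hab) hψdh
    _ = _ := by
        rw [← integral_const_mul, ← integral_add]
        · congr! 2 with _
          ring
        all_goals exact integrableOn_ball_of_continuous (by fun_prop) _ _

theorem eLpNorm_ball_le_integral_of_lt (hh : ContDiff ℝ 1 h) (h0 : ∀ x, 0 ≤ h x)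
    {p : ℝ≥0} (hp : (Module.finrank ℝ E : ℝ≥0).HolderConjugate p) {a b : ℝ} (ha : 0 < a)
    (hab : a < b) :
    eLpNorm h p (μ.restrict (ball 0 a)) ≤ eLpNormLESNormFDerivOneConst μ p *
      ENNReal.ofReal (∫ x in ball 0 b,
        ((1 + a⁻¹ * b) * ‖fderiv ℝ h x‖ + a⁻¹ * Module.finrank ℝ E * h x) ∂μ) := by
  set ψ : E → ℝ := radialCutoff a b
  have hhψ : ContDiff ℝ 1 fun x => h x * ψ x := hh.mul contDiff_radialCutoff
  have hhψs : HasCompactSupport fun x => h x * ψ x :=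
    (hasCompactSupport_radialCutoff ha hab).mul_left
  calc eLpNorm h p (μ.restrict (ball 0 a))
      = eLpNorm (fun x => h x * ψ x) p (μ.restrict (ball 0 a)) := by
        refine eLpNorm_congr_ae ((ae_restrict_mem measurableSet_ball).mono fun x hx => ?_)
        simp [ψ, radialCutoff_of_mem_ball ha hab hx]
    _ ≤ eLpNorm (fun x => h x * ψ x) p μ := eLpNorm_restrict_le _ _ _ _
    _ ≤ eLpNormLESNormFDerivOneConst μ p * eLpNorm (fderiv ℝ fun x => h x * ψ x) 1 μ :=
        eLpNorm_le_eLpNorm_fderiv_one μ hhψ hhψs hp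
    _ ≤ _ := by
        rw [eLpNorm_one_eq_lintegral_enorm, ← ofReal_integral_norm_eq_lintegral_enorm
          ((hhψ.continuous_fderiv one_ne_zero).integrable_of_hasCompactSupport (hhψs.fderiv ℝ))]
        gcongr
        exact integral_norm_fderiv_mul_radialCutoff_le μ hh h0 ha hab

theorem eLpNorm_ball_le_eLpNorm_fderiv_one_add (hh : ContDiff ℝ 1 h) (h0 : ∀ x, 0 ≤ h x)
    {p : ℝ≥0} (hp : (Module.finrank ℝ E : ℝ≥0).HolderConjugate p) {R : ℝ} (hR : 0 < R) :
    eLpNorm h p (μ.restrict (ball 0 R)) ≤ eLpNormLESNormFDerivOneConst μ p *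
      (3 * eLpNorm (fderiv ℝ h) 1 (μ.restrict (ball 0 R)) +
        ENNReal.ofReal (2 * Module.finrank ℝ E / R) * eLpNorm h 1 (μ.restrict (ball 0 R))) := by
  have hdh : Continuous (fderiv ℝ h) := hh.continuous_fderiv one_ne_zero
  have hhc : Continuous h := hh.continuous
  have hint₁ := integrableOn_ball_of_continuous (μ := μ) hdh 0 R
  have hint₂ := integrableOn_ball_of_continuous (μ := μ) hhc 0 R
  refine eLpNorm_restrict_ball_le_of_eventually_le hhc.aestronglyMeasurable ?_
  filter_upwards [Ico_mem_nhdsLT (half_lt_self hR)] with a ha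
  have ha0 : 0 < a := (half_pos hR).trans_le ha.1
  have haR : a⁻¹ * R ≤ 2 := by rw [inv_mul_le_iff₀ ha0]; linarith [ha.1]
  refine (eLpNorm_ball_le_integral_of_lt μ hh h0 hp ha0 ha.2).trans ?_
  gcongr
  calc ENNReal.ofReal (∫ x in ball 0 R,
        ((1 + a⁻¹ * R) * ‖fderiv ℝ h x‖ + a⁻¹ * Module.finrank ℝ E * h x) ∂μ)
      ≤ ENNReal.ofReal (∫ x in ball 0 R,
        (3 * ‖fderiv ℝ h x‖ + 2 * Module.finrank ℝ E / R * ‖h x‖) ∂μ) := by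
        have hinv : a⁻¹ ≤ 2 / R := (le_div_iff₀ hR).2 haR
        refine ENNReal.ofReal_le_ofReal (setIntegral_mono
          (integrableOn_ball_of_continuous (by fun_prop) _ _)
          (integrableOn_ball_of_continuous (by fun_prop) _ _) fun x => ?_)
        have hhx := h0 x
        dsimp only
        rw [Real.norm_of_nonneg hhx, mul_div_right_comm 2]
        gcongr
        linarith
    _ = _ := by
        rw [integral_add (hint₁.norm.const_mul _) (hint₂.norm.const_mul _), integral_const_mul,
          integral_const_mul, ENNReal.ofReal_add (by positivity) (by positivity),
          ENNReal.ofReal_mul (by positivity), ENNReal.ofReal_mul (by positivity),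
          ofReal_integral_norm_eq_lintegral_enorm hint₁,
          ofReal_integral_norm_eq_lintegral_enorm hint₂, eLpNorm_one_eq_lintegral_enorm,
          eLpNorm_one_eq_lintegral_enorm, ENNReal.ofReal_ofNat]

end SobolevOne

section Sobolev

theorem eLpNorm_norm_rpow_smul_le {α F G : Type*} [MeasurableSpace α] {μ : Measure α}
    [NormedAddCommGroup F] [NormedAddCommGroup G] [NormedSpace ℝ G] {f : α → F} {g : α → G}
    (hf : AEStronglyMeasurable f μ) (hg : AEStronglyMeasurable g μ) {s : ℝ} (hs : 0 < s)
    {p q r : ℝ≥0∞} [p.HolderTriple q r] :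
    eLpNorm (fun x => ‖f x‖ ^ s • g x) r μ ≤
      eLpNorm f (p * ENNReal.ofReal s) μ ^ s * eLpNorm g q μ := by
  rw [← eLpNorm_norm_rpow f hs]
  exact eLpNorm_smul_le_mul_eLpNorm hg (hf.norm.aemeasurable.pow_const s).aestronglyMeasurable

theorem eLpNorm_norm_rpow_add_one_le {α F : Type*} [MeasurableSpace α] {μ : Measure α}
    [NormedAddCommGroup F] {f : α → F} (hf : AEStronglyMeasurable f μ) {s : ℝ} (hs : 0 < s)
    {p q r : ℝ≥0∞} [p.HolderTriple q r] :
    eLpNorm (fun x => ‖f x‖ ^ (s + 1)) r μ ≤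
      eLpNorm f (p * ENNReal.ofReal s) μ ^ s * eLpNorm f q μ := by
  simpa [Real.rpow_add_one' (norm_nonneg _) (by positivity : s + 1 ≠ 0)] using
    eLpNorm_norm_rpow_smul_le hf hf.norm hs (p := p) (q := q) (r := r)

theorem eLpNorm_fderiv_norm_rpow_le {E F : Type*} [NormedAddCommGroup E] [NormedSpace ℝ E]
    [FiniteDimensional ℝ E] [MeasurableSpace E] [BorelSpace E] (μ : Measure E)
    [NormedAddCommGroup F] [InnerProductSpace ℝ F] {u : E → F} (hu : ContDiff ℝ 1 u)
    {s : ℝ≥0} (hs : 0 < s) {p q r : ℝ≥0∞} [p.HolderTriple q r] :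
    eLpNorm (fderiv ℝ fun x => ‖u x‖ ^ (s + 1 : ℝ)) r μ ≤
      (s + 1) * (eLpNorm u (p * s) μ ^ (s : ℝ) * eLpNorm (fderiv ℝ u) q μ) := by
  have hpt (x : E) : ‖fderiv ℝ (fun x => ‖u x‖ ^ (s + 1 : ℝ)) x‖₊ ≤
      (s + 1) * ‖‖u x‖ ^ (s : ℝ) • fderiv ℝ u x‖₊ := by
    have h := norm_fderiv_norm_rpow_le (hu.differentiable one_ne_zero) (x := x)
      (p := s + 1) (by simpa)
    rw [add_sub_cancel_right, mul_assoc] at h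
    rw [← NNReal.coe_le_coe]
    simpa [norm_smul, Real.abs_rpow_of_nonneg] using h
  refine (eLpNorm_le_nnreal_smul_eLpNorm_of_ae_le_mul (.of_forall hpt) r).trans ?_
  rw [ENNReal.smul_def, smul_eq_mul, ENNReal.coe_add, ENNReal.coe_one]
  gcongr
  simpa using eLpNorm_norm_rpow_smul_le hu.continuous.aestronglyMeasurable
    (hu.continuous_fderiv one_ne_zero).aestronglyMeasurable (NNReal.coe_pos.2 hs)

theorem ennreal_le_of_rpow_add_one_le {x y : ℝ≥0∞} {s : ℝ} (hs : 0 ≤ s) (hx : x ≠ ∞)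
    (h : x ^ (s + 1) ≤ x ^ s * y) : x ≤ y := by
  rcases eq_or_ne x 0 with rfl | hx0
  · exact zero_le
  rw [ENNReal.rpow_add _ _ hx0 hx, ENNReal.rpow_one] at h
  exact (ENNReal.mul_le_mul_iff_right (ENNReal.rpow_pos hx0.bot_lt hx).ne'
    (ENNReal.rpow_ne_top_of_nonneg hs hx)).1 h

theorem lt_sobolev_exponent {n p q : ℝ≥0} (hp : 0 < p) (hpn : p < n)
    (hq : (q : ℝ)⁻¹ = (p : ℝ)⁻¹ - (n : ℝ)⁻¹) : p < q := by
  have hn_inv_pos : 0 < (n : ℝ)⁻¹ := inv_pos.2 (mod_cast hp.trans hpn)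
  have hn_inv_lt : (n : ℝ)⁻¹ < (p : ℝ)⁻¹ := inv_strictAnti₀ (mod_cast hp) (mod_cast hpn)
  have hq₀ : 0 < (q : ℝ)⁻¹ := by linarith
  have hqp : (q : ℝ)⁻¹ < (p : ℝ)⁻¹ := by linarith
  exact_mod_cast (inv_lt_inv₀ (inv_pos.1 hq₀) (mod_cast hp)).1 hqp

theorem exists_sobolev_exponents {n p q : ℝ≥0} (hp : 1 < p) (hpn : p < n)
    (hq : (q : ℝ)⁻¹ = (p : ℝ)⁻¹ - (n : ℝ)⁻¹) :
    ∃ n' p' s : ℝ≥0, n.HolderConjugate n' ∧ p.HolderConjugate p' ∧ 0 < s ∧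
      p' * s = q ∧ n' * (s + 1) = q := by
  obtain ⟨n', hn⟩ : ∃ n', n.HolderConjugate n' := ⟨_, .conjExponent (hp.trans hpn)⟩
  obtain ⟨p', hpp'⟩ : ∃ p', p.HolderConjugate p' := ⟨_, .conjExponent hp⟩
  have hq0 : 0 < q := hpp'.pos.trans (lt_sobolev_exponent hpp'.pos hpn hq)
  have hp0 := hpp'.symm.pos.ne'
  have hn0 := hn.symm.pos.ne'
  refine ⟨n', p', q / p', hn, hpp', div_pos hq0 hpp'.symm.pos, by field_simp, ?_⟩
  have h : (n' : ℝ)⁻¹ = (p' : ℝ)⁻¹ + (q : ℝ)⁻¹ := by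
    have h₁ := hpp'.coe.inv_add_inv_eq_one
    have h₂ := hn.coe.inv_add_inv_eq_one
    linarith
  rw [← NNReal.coe_inj]
  push_cast
  field_simp at h ⊢
  linarith

variable {E : Type*} [NormedAddCommGroup E] [InnerProductSpace ℝ E] [FiniteDimensional ℝ E]
  [MeasurableSpace E] [BorelSpace E] (μ : Measure E) [μ.IsAddHaarMeasure]

theorem memLp_ball_of_continuous {X F : Type*} [MetricSpace X] [ProperSpace X]
    [MeasurableSpace X] [OpensMeasurableSpace X] {μ : Measure X} [IsFiniteMeasureOnCompacts μ]
    [NormedAddCommGroup F] [SecondCountableTopologyEither X F] {f : X → F} (hf : Continuous f)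
    {p : ℝ≥0∞} (x : X) (r : ℝ) : MemLp f p (μ.restrict (ball x r)) := by
  have : IsFiniteMeasure (μ.restrict (ball x r)) := ⟨by simpa using measure_ball_lt_top⟩
  obtain ⟨C, hC⟩ := (isCompact_closedBall x r).exists_bound_of_continuousOn hf.continuousOn
  exact .of_bound hf.aestronglyMeasurable C
    (ae_restrict_of_forall_mem measurableSet_ball fun y hy => hC y (ball_subset_closedBall hy))

theorem exists_eLpNorm_ball_le_eLpNorm_fderiv_add (F : Type*) [NormedAddCommGroup F]
    [InnerProductSpace ℝ F] {p q : ℝ≥0} (hp : 1 < p) (hpn : p < Module.finrank ℝ E)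
    (hq : (q : ℝ)⁻¹ = (p : ℝ)⁻¹ - (Module.finrank ℝ E : ℝ)⁻¹) :
    ∃ C : ℝ≥0, ∀ u : E → F, ContDiff ℝ 1 u → ∀ R : ℝ, 0 < R →
      eLpNorm u q (μ.restrict (ball 0 R)) ≤ C * (eLpNorm (fderiv ℝ u) p (μ.restrict (ball 0 R)) +
        ENNReal.ofReal R⁻¹ * eLpNorm u p (μ.restrict (ball 0 R))) := by
  set n := Module.finrank ℝ E
  obtain ⟨n', p', s, hn, hpp', hs, hsp, hsn⟩ := exists_sobolev_exponents hp hpn hq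
  set C₀ := eLpNormLESNormFDerivOneConst μ n'
  refine ⟨C₀ * (3 * (s + 1) + 2 * n), fun u hu R hR => ?_⟩
  set ν := μ.restrict (ball 0 R)
  set X := eLpNorm u q ν
  have : ENNReal.HolderTriple p' p 1 := hpp'.symm.coe_ennreal
  have hX : X ≠ ∞ := (memLp_ball_of_continuous hu.continuous 0 R).eLpNorm_ne_top
  have hfd : eLpNorm (fderiv ℝ fun x => ‖u x‖ ^ (s + 1 : ℝ)) 1 ν ≤
      (s + 1) * (X ^ (s : ℝ) * eLpNorm (fderiv ℝ u) p ν) := by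
    simpa only [← ENNReal.coe_mul, hsp] using
      eLpNorm_fderiv_norm_rpow_le ν hu hs (p := p') (q := p) (r := 1)
  have hfu : eLpNorm (fun x => ‖u x‖ ^ (s + 1 : ℝ)) 1 ν ≤ X ^ (s : ℝ) * eLpNorm u p ν := by
    simpa [← ENNReal.coe_mul, hsp] using
      eLpNorm_norm_rpow_add_one_le (μ := ν) hu.continuous.aestronglyMeasurable
        (NNReal.coe_pos.2 hs) (p := p') (q := p) (r := 1)
  have hpow : X ^ (s + 1 : ℝ) = eLpNorm (fun x => ‖u x‖ ^ (s + 1 : ℝ)) n' ν := by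
    rw [eLpNorm_norm_rpow u (by positivity), ENNReal.ofReal_add s.coe_nonneg zero_le_one]
    simp [X, ← hsn]
  refine ennreal_le_of_rpow_add_one_le s.coe_nonneg hX ?_
  calc X ^ (s + 1 : ℝ)
      ≤ C₀ * (3 * eLpNorm (fderiv ℝ fun x => ‖u x‖ ^ (s + 1 : ℝ)) 1 ν +
          ENNReal.ofReal (2 * n / R) * eLpNorm (fun x => ‖u x‖ ^ (s + 1 : ℝ)) 1 ν) := by
        rw [hpow]
        exact eLpNorm_ball_le_eLpNorm_fderiv_one_add μ (hu.norm_rpow (by simpa))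
          (fun x => by positivity) hn hR
    _ ≤ C₀ * (3 * ((s + 1) * (X ^ (s : ℝ) * eLpNorm (fderiv ℝ u) p ν)) +
          ENNReal.ofReal (2 * n / R) * (X ^ (s : ℝ) * eLpNorm u p ν)) := by gcongr
    _ = X ^ (s : ℝ) * (C₀ * (3 * (s + 1) * eLpNorm (fderiv ℝ u) p ν + 2 * n *
          (ENNReal.ofReal R⁻¹ * eLpNorm u p ν))) := by
        rw [div_eq_mul_inv, ENNReal.ofReal_mul (by positivity)]
        simp only [Nat.ofNat_nonneg, ENNReal.ofReal_mul, ENNReal.ofReal_ofNat,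
          ENNReal.ofReal_natCast]
        ring
    _ ≤ X ^ (s : ℝ) * (↑(C₀ * (3 * (s + 1) + 2 * n)) * (eLpNorm (fderiv ℝ u) p ν +
          ENNReal.ofReal R⁻¹ * eLpNorm u p ν)) := by
        rw [ENNReal.coe_mul, mul_assoc (C₀ : ℝ≥0∞)]
        push_cast
        gcongr
        rw [add_mul]
        gcongr <;> simp

end Sobolev

section Poincare

theorem rpow_lintegral_le_lintegral_rpow {α : Type*} [MeasurableSpace α] {μ : Measure α}
    [IsProbabilityMeasure μ] {f : α → ℝ≥0∞} (hf : AEMeasurable f μ) {p : ℝ} (hp : 1 ≤ p) :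
    (∫⁻ x, f x ∂μ) ^ p ≤ ∫⁻ x, f x ^ p ∂μ := by
  have hp0 : 0 < p := by linarith
  have h := eLpNorm_le_eLpNorm_of_exponent_le (ENNReal.one_le_ofReal.2 hp) hf.aestronglyMeasurable
  rw [eLpNorm_one_eq_lintegral_enorm, eLpNorm_eq_lintegral_rpow_enorm_toReal (by simpa) (by simp),
    ENNReal.toReal_ofReal hp0.le, one_div, ENNReal.le_rpow_inv_iff hp0] at h
  simpa only [enorm_eq_self] using h

theorem lintegral_lintegral_lintegral_rotate {α β γ : Type*} [MeasurableSpace α]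
    [MeasurableSpace β] [MeasurableSpace γ] {μ : Measure α} {ν : Measure β} {κ : Measure γ}
    [SFinite μ] [SFinite ν] [SFinite κ] {f : α × β × γ → ℝ≥0∞} (hf : Measurable f) :
    ∫⁻ x, ∫⁻ y, ∫⁻ z, f (x, y, z) ∂κ ∂ν ∂μ = ∫⁻ z, ∫⁻ x, ∫⁻ y, f (x, y, z) ∂ν ∂μ ∂κ := by
  have hf' : Measurable fun w : (α × γ) × β => f (w.1.1, w.2, w.1.2) := hf.comp (by fun_prop)
  calc ∫⁻ x, ∫⁻ y, ∫⁻ z, f (x, y, z) ∂κ ∂ν ∂μ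
      = ∫⁻ x, ∫⁻ z, ∫⁻ y, f (x, y, z) ∂ν ∂κ ∂μ := lintegral_congr fun x =>
        lintegral_lintegral_swap (hf.comp measurable_prodMk_left).aemeasurable
    _ = _ := lintegral_lintegral_swap hf'.lintegral_prod_right'.aemeasurable

variable {E F : Type*} [NormedAddCommGroup E] [NormedSpace ℝ E]
  [NormedAddCommGroup F] [NormedSpace ℝ F] {u : E → F}

theorem enorm_sub_rpow_le_lintegral_fderiv (hu : ContDiff ℝ 1 u) {p : ℝ} (hp : 1 ≤ p) (x y : E) :
    ‖u y - u x‖ₑ ^ p ≤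
      ‖y - x‖ₑ ^ p * ∫⁻ t in Icc (0 : ℝ) 1, ‖fderiv ℝ u (AffineMap.lineMap x y t)‖ₑ ^ p := by
  have hp0 : 0 < p := by linarith
  have : IsProbabilityMeasure (volume.restrict (Icc (0 : ℝ) 1)) := ⟨by simp⟩
  have hline : ContDiff ℝ 1 (AffineMap.lineMap x y : ℝ → E) :=
    (ContinuousAffineMap.lineMap x y : ℝ →ᴬ[ℝ] E).contDiff
  have hderiv (t : ℝ) : ‖deriv (u ∘ AffineMap.lineMap x y) t‖ₑ ≤
      ‖fderiv ℝ u (AffineMap.lineMap x y t)‖ₑ * ‖y - x‖ₑ := by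
    rw [fderiv_comp_deriv _ (hu.differentiable one_ne_zero _)
      (hline.differentiable one_ne_zero _), AffineMap.hasDerivAt_lineMap.deriv]
    exact ContinuousLinearMap.le_opENorm _ _
  calc ‖u y - u x‖ₑ ^ p
      ≤ (∫⁻ t in Icc (0 : ℝ) 1, ‖deriv (u ∘ AffineMap.lineMap x y) t‖ₑ) ^ p := by
        gcongr
        simpa using enorm_sub_le_lintegral_deriv_of_contDiffOn_Icc
          (hu.comp hline).contDiffOn zero_le_one
    _ ≤ (∫⁻ t in Icc (0 : ℝ) 1, ‖fderiv ℝ u (AffineMap.lineMap x y t)‖ₑ * ‖y - x‖ₑ) ^ p := by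
        gcongr
        exact hderiv _
    _ ≤ ∫⁻ t in Icc (0 : ℝ) 1, (‖fderiv ℝ u (AffineMap.lineMap x y t)‖ₑ * ‖y - x‖ₑ) ^ p :=
        rpow_lintegral_le_lintegral_rpow (by
          have := (hu.continuous_fderiv one_ne_zero).comp hline.continuous
          exact (this.enorm.measurable.mul_const _).aemeasurable) hp
    _ = _ := by
        simp_rw [ENNReal.mul_rpow_of_nonneg _ _ hp0.le]
        rw [lintegral_mul_const' _ _ (by finiteness), mul_comm]

variable [MeasurableSpace E] [BorelSpace E] [FiniteDimensional ℝ E]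
  (μ : Measure E) [μ.IsAddHaarMeasure]

theorem setLIntegral_comp_add_smul_le (g : E → ℝ≥0∞) (a : E) {t : ℝ} (ht : t ≠ 0) {s s' : Set E}
    (h : MapsTo (fun y => a + t • y) s s') :
    ∫⁻ y in s, g (a + t • y) ∂μ ≤
      ENNReal.ofReal |(t ^ Module.finrank ℝ E)⁻¹| * ∫⁻ y in s', g y ∂μ := by
  have hT : MeasurableEmbedding fun y : E => a + t • y :=
    (measurableEmbedding_addLeft a).comp (measurableEmbedding_const_smul₀ ht)
  have hmap : μ.map (fun y => a + t • y) = ENNReal.ofReal |(t ^ Module.finrank ℝ E)⁻¹| • μ := by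
    have : (fun y : E => a + t • y) = (a + ·) ∘ (t • ·) := rfl
    rw [this, ← Measure.map_map (by fun_prop) (by fun_prop),
      Measure.map_addHaar_smul μ ht, Measure.map_smul, map_add_left_eq_self]
  calc ∫⁻ y in s, g (a + t • y) ∂μ
      ≤ ∫⁻ y in (fun y => a + t • y) ⁻¹' s', g (a + t • y) ∂μ := lintegral_mono_set h
    _ = _ := by
        rw [← hT.lintegral_map, ← hT.restrict_map, hmap, Measure.restrict_smul,
          lintegral_smul_measure, smul_eq_mul]

variable {Ω : Set E}

theorem setLIntegral_setLIntegral_lineMap_le (hΩ : Convex ℝ Ω) {g : E → ℝ≥0∞} (hg : Measurable g)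
    {t : ℝ} (ht : t ∈ Icc 0 1) :
    ∫⁻ x in Ω, ∫⁻ y in Ω, g (AffineMap.lineMap x y t) ∂μ ∂μ ≤
      2 ^ Module.finrank ℝ E * μ Ω * ∫⁻ y in Ω, g y ∂μ := by
  wlog h : 1 / 2 ≤ t generalizing t
  · rw [lintegral_lintegral_swap]
    · simpa only [AffineMap.lineMap_apply_one_sub] using
        this (t := 1 - t) ⟨by linarith [ht.2], by linarith [ht.1]⟩ (by linarith)
    · exact (hg.comp (by fun_prop : Continuous fun z : E × E =>
        AffineMap.lineMap z.1 z.2 t).measurable).aemeasurable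
  have ht0 : 0 < t := by linarith
  have htn : ENNReal.ofReal |(t ^ Module.finrank ℝ E)⁻¹| ≤ 2 ^ Module.finrank ℝ E := by
    rw [abs_of_nonneg (by positivity), ← inv_pow, ← ENNReal.ofReal_ofNat 2,
      ← ENNReal.ofReal_pow (by simp)]
    gcongr
    rwa [inv_le_comm₀ ht0 two_pos, ← one_div]
  calc ∫⁻ x in Ω, ∫⁻ y in Ω, g (AffineMap.lineMap x y t) ∂μ ∂μ
      ≤ ∫⁻ x in Ω, 2 ^ Module.finrank ℝ E * ∫⁻ y in Ω, g y ∂μ ∂μ := by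
        refine setLIntegral_mono measurable_const fun x hx => ?_
        simp_rw [AffineMap.lineMap_apply_module]
        refine (setLIntegral_comp_add_smul_le μ g _ ht0.ne' (s' := Ω) fun y hy => ?_).trans
          (by gcongr)
        simpa only [AffineMap.lineMap_apply_module] using hΩ.lineMap_mem hx hy ht
    _ = _ := by rw [setLIntegral_const, mul_right_comm]

theorem lintegral_lintegral_lintegral_lineMap_le (hΩ : Convex ℝ Ω) {g : E → ℝ≥0∞}
    (hg : Measurable g) :
    ∫⁻ x in Ω, ∫⁻ y in Ω, (∫⁻ t in Icc (0 : ℝ) 1, g (AffineMap.lineMap x y t)) ∂μ ∂μ ≤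
      2 ^ Module.finrank ℝ E * μ Ω * ∫⁻ x in Ω, g x ∂μ := by
  have hline : Measurable fun z : E × E × ℝ => g (AffineMap.lineMap z.1 z.2.1 z.2.2) :=
    hg.comp (by fun_prop : Continuous fun z : E × E × ℝ =>
      AffineMap.lineMap z.1 z.2.1 z.2.2).measurable
  rw [lintegral_lintegral_lintegral_rotate hline]
  calc ∫⁻ t in Icc (0 : ℝ) 1, ∫⁻ x in Ω, ∫⁻ y in Ω, g (AffineMap.lineMap x y t) ∂μ ∂μ
      ≤ ∫⁻ _ in Icc (0 : ℝ) 1, 2 ^ Module.finrank ℝ E * μ Ω * ∫⁻ x in Ω, g x ∂μ :=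
        setLIntegral_mono measurable_const fun t ht =>
          setLIntegral_setLIntegral_lineMap_le μ hΩ hg ht
    _ = _ := by rw [setLIntegral_const, Real.volume_Icc, sub_zero, ENNReal.ofReal_one, mul_one]

theorem lintegral_lintegral_enorm_sub_rpow_le (hΩ : Convex ℝ Ω) (hΩm : MeasurableSet Ω)
    (hΩb : IsBounded Ω) (hu : ContDiff ℝ 1 u) {p : ℝ} (hp : 1 ≤ p) :
    ∫⁻ x in Ω, ∫⁻ y in Ω, ‖u y - u x‖ₑ ^ p ∂μ ∂μ ≤
      ediam Ω ^ p * (2 ^ Module.finrank ℝ E * μ Ω * ∫⁻ x in Ω, ‖fderiv ℝ u x‖ₑ ^ p ∂μ) := by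
  have hd : ediam Ω ^ p ≠ ∞ := ENNReal.rpow_ne_top_of_nonneg (by linarith) hΩb.ediam_ne_top
  have hDu : Measurable fun x => ‖fderiv ℝ u x‖ₑ ^ p :=
    (hu.continuous_fderiv one_ne_zero).enorm.measurable.pow_const p
  calc ∫⁻ x in Ω, ∫⁻ y in Ω, ‖u y - u x‖ₑ ^ p ∂μ ∂μ
      ≤ ∫⁻ x in Ω, ∫⁻ y in Ω, ediam Ω ^ p *
          (∫⁻ t in Icc (0 : ℝ) 1, ‖fderiv ℝ u (AffineMap.lineMap x y t)‖ₑ ^ p) ∂μ ∂μ := by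
        refine setLIntegral_mono' hΩm fun x hx => setLIntegral_mono' hΩm fun y hy =>
          (enorm_sub_rpow_le_lintegral_fderiv hu hp x y).trans ?_
        gcongr
        rw [← edist_eq_enorm_sub]
        exact edist_le_ediam_of_mem hy hx
    _ ≤ _ := by
        simp_rw [lintegral_const_mul' _ _ hd]
        gcongr
        exact lintegral_lintegral_lintegral_lineMap_le μ hΩ hDu

theorem enorm_sub_setAverage_rpow_le {α : Type*} [MeasurableSpace α] {μ : Measure α} {s : Set α}
    (hs₀ : μ s ≠ 0) (hs : μ s ≠ ∞) [CompleteSpace F] {f : α → F} (hf : IntegrableOn f s μ)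
    {p : ℝ} (hp : 1 ≤ p) (c : F) :
    ‖c - ⨍ y in s, f y ∂μ‖ₑ ^ p ≤ (μ s)⁻¹ * ∫⁻ y in s, ‖f y - c‖ₑ ^ p ∂μ := by
  have : 0 ≤ p := by linarith
  have : IsFiniteMeasure (μ.restrict s) := ⟨by simpa using hs.lt_top⟩
  have : NeZero (μ.restrict s) := ⟨by simpa using hs₀⟩
  have hfc : Integrable (fun y => f y - c) (μ.restrict s) := hf.sub (integrable_const c)
  have havg : (⨍ y in s, (f y - c) ∂μ) = (⨍ y in s, f y ∂μ) - c := by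
    rw [average, average, integral_sub hf.to_average (integrable_const c), integral_const,
      probReal_univ, one_smul]
  calc ‖c - ⨍ y in s, f y ∂μ‖ₑ ^ p = ‖⨍ y in s, (f y - c) ∂μ‖ₑ ^ p := by
        rw [havg, enorm_sub_rev]
    _ ≤ (⨍⁻ y in s, ‖f y - c‖ₑ ∂μ) ^ p := by
        gcongr
        exact enorm_integral_le_lintegral_enorm _
    _ ≤ ⨍⁻ y in s, ‖f y - c‖ₑ ^ p ∂μ :=
        rpow_lintegral_le_lintegral_rpow hfc.to_average.aestronglyMeasurable.enorm hp
    _ = _ := by rw [setLAverage_eq, ENNReal.div_eq_inv_mul]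

theorem eLpNorm_sub_setAverage_le (hΩ : Convex ℝ Ω) (hΩm : MeasurableSet Ω) (hΩ₀ : μ Ω ≠ 0)
    (hΩb : IsBounded Ω) [CompleteSpace F] (hu : ContDiff ℝ 1 u) (hui : IntegrableOn u Ω μ)
    {p : ℝ≥0} (hp : 1 ≤ p) :
    eLpNorm (fun x => u x - ⨍ y in Ω, u y ∂μ) p (μ.restrict Ω) ≤
      2 ^ (Module.finrank ℝ E / p : ℝ) * ediam Ω * eLpNorm (fderiv ℝ u) p (μ.restrict Ω) := by
  have hp0 : (0 : ℝ) < p := by positivity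
  have hΩ₁ : μ Ω ≠ ∞ := hΩb.measure_lt_top.ne
  have hp0' : (p : ℝ≥0∞) ≠ 0 := by positivity
  simp only [eLpNorm_eq_lintegral_rpow_enorm_toReal hp0' ENNReal.coe_ne_top, ENNReal.coe_toReal,
    one_div]
  rw [ENNReal.rpow_inv_le_iff hp0, ENNReal.mul_rpow_of_nonneg _ _ hp0.le,
    ENNReal.mul_rpow_of_nonneg _ _ hp0.le, ENNReal.rpow_inv_rpow hp0.ne', ← ENNReal.rpow_mul,
    div_mul_cancel₀ _ hp0.ne', ENNReal.rpow_natCast]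
  calc ∫⁻ x in Ω, ‖u x - ⨍ y in Ω, u y ∂μ‖ₑ ^ (p : ℝ) ∂μ
      ≤ ∫⁻ x in Ω, (μ Ω)⁻¹ * ∫⁻ y in Ω, ‖u y - u x‖ₑ ^ (p : ℝ) ∂μ ∂μ := by
        gcongr with x
        exact enorm_sub_setAverage_rpow_le hΩ₀ hΩ₁ hui (mod_cast hp) _
    _ ≤ (μ Ω)⁻¹ * (ediam Ω ^ (p : ℝ) * (2 ^ Module.finrank ℝ E * μ Ω *
          ∫⁻ x in Ω, ‖fderiv ℝ u x‖ₑ ^ (p : ℝ) ∂μ)) := by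
        rw [lintegral_const_mul' _ _ (ENNReal.inv_ne_top.2 hΩ₀)]
        gcongr
        exact lintegral_lintegral_enorm_sub_rpow_le μ hΩ hΩm hΩb hu (mod_cast hp)
    _ = _ := by
        rw [mul_comm _ (μ Ω), mul_assoc (μ Ω), mul_left_comm _ (μ Ω),
          ENNReal.inv_mul_cancel_left hΩ₀ hΩ₁, ← mul_assoc, mul_comm (ediam Ω ^ _)]

end Poincare

section SobolevPoincare

theorem enorm_setAverage_le {α F : Type*} [MeasurableSpace α] {μ : Measure α} {s : Set α}
    [NormedAddCommGroup F] [NormedSpace ℝ F] [CompleteSpace F]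
    (hs₀ : μ s ≠ 0) (hs : μ s ≠ ∞) {f : α → F} (hf : IntegrableOn f s μ) {p : ℝ≥0} (hp : 1 ≤ p) :
    ‖⨍ y in s, f y ∂μ‖ₑ ≤ μ s ^ (-(p : ℝ)⁻¹) * eLpNorm f p (μ.restrict s) := by
  have hp0 : (0 : ℝ) < p := by positivity
  rw [eLpNorm_eq_lintegral_rpow_enorm_toReal (by positivity) ENNReal.coe_ne_top,
    ENNReal.coe_toReal, one_div, ENNReal.rpow_neg, ← ENNReal.inv_rpow,
    ← ENNReal.mul_rpow_of_nonneg _ _ (by positivity), ENNReal.le_rpow_inv_iff hp0]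
  simpa using enorm_sub_setAverage_rpow_le hs₀ hs hf (mod_cast hp) 0

variable {E F : Type*} [NormedAddCommGroup E] [InnerProductSpace ℝ E] [FiniteDimensional ℝ E]
  [MeasurableSpace E] [BorelSpace E] (μ : Measure E) [μ.IsAddHaarMeasure]
  [NormedAddCommGroup F] [InnerProductSpace ℝ F] [CompleteSpace F]

theorem eLpNorm_setAverage_ball_le [Nontrivial E] {u : E → F} {p q : ℝ≥0} (hp : 1 ≤ p) (hq₀ : q ≠ 0)
    (hq : (q : ℝ)⁻¹ = (p : ℝ)⁻¹ - (Module.finrank ℝ E : ℝ)⁻¹) {R θ : ℝ} (hR : 0 < R) (hθ : 0 < θ)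
    (hu : IntegrableOn u (ball 0 R) μ) :
    eLpNorm (fun _ => ⨍ y in ball 0 R, u y ∂μ) q (μ.restrict (ball 0 (θ * R))) ≤
      μ (ball 0 1) ^ (-(Module.finrank ℝ E : ℝ)⁻¹) *
        (ENNReal.ofReal (θ ^ (Module.finrank ℝ E / q : ℝ) * R⁻¹) *
          eLpNorm u p (μ.restrict (ball 0 R))) := by
  have hn : Module.finrank ℝ E ≠ 0 := Module.finrank_pos.ne'
  set n := Module.finrank ℝ E
  set m := μ (ball 0 1)
  have hm₀ : m ≠ 0 := (measure_ball_pos μ 0 one_pos).ne'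
  have hm : m ≠ ∞ := measure_ball_lt_top.ne
  have hscale : ENNReal.ofReal ((θ * R) ^ n) ^ (q : ℝ)⁻¹ * ENNReal.ofReal (R ^ n) ^ (-(p : ℝ)⁻¹) =
      ENNReal.ofReal (θ ^ (n / q : ℝ) * R⁻¹) := by
    rw [ENNReal.ofReal_rpow_of_pos (by positivity), ENNReal.ofReal_rpow_of_pos (by positivity),
      ← ENNReal.ofReal_mul (by positivity), mul_pow, Real.mul_rpow (by positivity) (by positivity),
      mul_assoc, ← Real.rpow_add (by positivity), ← Real.rpow_natCast_mul hθ.le,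
      ← Real.rpow_natCast_mul hR.le, ← div_eq_mul_inv, ← Real.rpow_neg_one R]
    have hexp : (n : ℝ) * ((q : ℝ)⁻¹ + -(p : ℝ)⁻¹) = -1 := by
      rw [hq]
      field_simp
      ring
    rw [hexp]
  rw [eLpNorm_const' _ (by positivity) ENNReal.coe_ne_top, Measure.restrict_apply_univ,
    ENNReal.coe_toReal, one_div]
  calc ‖⨍ y in ball 0 R, u y ∂μ‖ₑ * μ (ball 0 (θ * R)) ^ (q : ℝ)⁻¹
      ≤ μ (ball 0 R) ^ (-(p : ℝ)⁻¹) * eLpNorm u p (μ.restrict (ball 0 R)) *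
          μ (ball 0 (θ * R)) ^ (q : ℝ)⁻¹ := by
        gcongr
        exact enorm_setAverage_le (measure_ball_pos μ 0 hR).ne' measure_ball_lt_top.ne hu hp
    _ = (ENNReal.ofReal ((θ * R) ^ n) ^ (q : ℝ)⁻¹ * ENNReal.ofReal (R ^ n) ^ (-(p : ℝ)⁻¹)) *
          (m ^ (q : ℝ)⁻¹ * m ^ (-(p : ℝ)⁻¹)) * eLpNorm u p (μ.restrict (ball 0 R)) := by
        rw [Measure.addHaar_ball μ 0 hR.le, Measure.addHaar_ball μ 0 (r := θ * R) (by positivity),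
          ENNReal.mul_rpow_of_ne_top ENNReal.ofReal_ne_top hm,
          ENNReal.mul_rpow_of_ne_top ENNReal.ofReal_ne_top hm]
        ring
    _ = _ := by
        rw [hscale, ← ENNReal.rpow_add _ _ hm₀ hm, hq]
        ring_nf

theorem exists_eLpNorm_ball_sub_setAverage_le {p q : ℝ≥0} (hp : 1 < p)
    (hpn : p < Module.finrank ℝ E) (hq : (q : ℝ)⁻¹ = (p : ℝ)⁻¹ - (Module.finrank ℝ E : ℝ)⁻¹) :
    ∃ C : ℝ≥0, ∀ u : E → F, ContDiff ℝ 1 u → ∀ R : ℝ, 0 < R →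
      eLpNorm (fun x => u x - ⨍ y in ball 0 R, u y ∂μ) q (μ.restrict (ball 0 R)) ≤
        C * eLpNorm (fderiv ℝ u) p (μ.restrict (ball 0 R)) := by
  obtain ⟨C, hC⟩ := exists_eLpNorm_ball_le_eLpNorm_fderiv_add μ F hp hpn hq
  set a : ℝ≥0 := 2 ^ (Module.finrank ℝ E / p : ℝ)
  refine ⟨C * (1 + 2 * a), fun u hu R hR => ?_⟩
  set w := fun x => u x - ⨍ y in ball 0 R, u y ∂μ
  set D := eLpNorm (fderiv ℝ u) p (μ.restrict (ball 0 R))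
  have hpoincare : eLpNorm w p (μ.restrict (ball 0 R)) ≤ a * (2 * ENNReal.ofReal R) * D := by
    refine (eLpNorm_sub_setAverage_le μ (convex_ball 0 R) measurableSet_ball
      (measure_ball_pos μ 0 hR).ne' isBounded_ball hu
      (integrableOn_ball_of_continuous hu.continuous 0 R) hp.le).trans ?_
    rw [← ENNReal.coe_ofNat, ← ENNReal.coe_rpow_of_ne_zero two_ne_zero]
    gcongr
    rw [← eball_ofReal]
    exact ediam_eball_le
  have hfd : fderiv ℝ w = fderiv ℝ u := funext fun x => fderiv_sub_const _
  calc eLpNorm w q (μ.restrict (ball 0 R))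
      ≤ C * (D + ENNReal.ofReal R⁻¹ * eLpNorm w p (μ.restrict (ball 0 R))) := by
        simpa only [hfd] using hC w (hu.sub contDiff_const) R hR
    _ ≤ C * (D + ENNReal.ofReal R⁻¹ * (a * (2 * ENNReal.ofReal R) * D)) := by gcongr
    _ = C * (D + ENNReal.ofReal R⁻¹ * ENNReal.ofReal R * (2 * a * D)) := by ring
    _ = _ := by
        rw [← ENNReal.ofReal_mul (by positivity), inv_mul_cancel₀ hR.ne', ENNReal.ofReal_one]
        push_cast
        ring

theorem exists_eLpNorm_ball_mul_le {p q : ℝ≥0} (hp : 1 < p)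
    (hpn : p < Module.finrank ℝ E) (hq : (q : ℝ)⁻¹ = (p : ℝ)⁻¹ - (Module.finrank ℝ E : ℝ)⁻¹) :
    ∃ C : ℝ≥0, ∀ u : E → F, ContDiff ℝ 1 u → ∀ R θ : ℝ, 0 < R → 0 < θ → θ ≤ 1 →
      eLpNorm u q (μ.restrict (ball 0 (θ * R))) ≤
        C * (eLpNorm (fderiv ℝ u) p (μ.restrict (ball 0 R)) +
          ENNReal.ofReal (θ ^ (Module.finrank ℝ E / q : ℝ) * R⁻¹) *
            eLpNorm u p (μ.restrict (ball 0 R))) := by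
  obtain ⟨C, hC⟩ := exists_eLpNorm_ball_sub_setAverage_le (F := F) μ hp hpn hq
  have : Nontrivial E := Module.nontrivial_of_finrank_pos (R := ℝ) (by
    exact_mod_cast (zero_le_one.trans_lt hp).trans hpn)
  have hq₁ : 1 < q :=
    hp.trans (lt_sobolev_exponent (zero_lt_one.trans hp) (mod_cast hpn) (mod_cast hq))
  set K : ℝ≥0∞ := μ (ball 0 1) ^ (-(Module.finrank ℝ E : ℝ)⁻¹)
  have hK : K ≠ ∞ := by
    simp [K, ENNReal.rpow_neg, (measure_ball_pos μ (0 : E) one_pos).ne']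
  refine ⟨C + K.toNNReal, fun u hu R θ hR hθ hθ₁ => ?_⟩
  set c := ⨍ y in ball 0 R, u y ∂μ
  calc eLpNorm u q (μ.restrict (ball 0 (θ * R)))
      = eLpNorm ((fun x => u x - c) + fun _ => c) q (μ.restrict (ball 0 (θ * R))) := by
        congr 1
        ext x
        simp
    _ ≤ eLpNorm (fun x => u x - c) q (μ.restrict (ball 0 (θ * R))) +
          eLpNorm (fun _ => c) q (μ.restrict (ball 0 (θ * R))) :=
        eLpNorm_add_le (hu.continuous.sub continuous_const).aestronglyMeasurable
          aestronglyMeasurable_const (mod_cast hq₁.le)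
    _ ≤ C * eLpNorm (fderiv ℝ u) p (μ.restrict (ball 0 R)) +
          K * (ENNReal.ofReal (θ ^ (Module.finrank ℝ E / q : ℝ) * R⁻¹) *
            eLpNorm u p (μ.restrict (ball 0 R))) := by
        gcongr
        · refine (eLpNorm_mono_measure _ (Measure.restrict_mono_set μ (ball_subset_ball ?_))).trans
            (hC u hu R hR)
          nlinarith
        · exact eLpNorm_setAverage_ball_le μ hp.le (zero_lt_one.trans hq₁).ne' hq hR hθ
            (integrableOn_ball_of_continuous hu.continuous 0 R)
    _ ≤ _ := by
        rw [ENNReal.coe_add, ENNReal.coe_toNNReal hK, mul_add]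
        gcongr <;> simp

end SobolevPoincare

section Mollification

open scoped Convolution

theorem eLpNorm_convolution_le {G F : Type*} [AddCommGroup G] [MeasurableSpace G]
    [MeasurableAdd₂ G] [MeasurableNeg G] {μ : Measure G} [SFinite μ] [μ.IsAddLeftInvariant]
    [NormedAddCommGroup F] [NormedSpace ℝ F] {ρ : G → ℝ} (hρ : Integrable ρ μ)
    (hρ₀ : 0 ≤ ρ) (hρ₁ : ∫ x, ρ x ∂μ = 1) {f : G → F} (hf : AEStronglyMeasurable f μ)
    {p : ℝ≥0} (hp : 1 ≤ p) :
    eLpNorm (ρ ⋆[ContinuousLinearMap.lsmul ℝ ℝ, μ] f) p μ ≤ eLpNorm f p μ := by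
  have hp' : (1 : ℝ) ≤ p := mod_cast hp
  have hρm : AEMeasurable (fun t => ENNReal.ofReal (ρ t)) μ := hρ.1.aemeasurable.ennreal_ofReal
  set ν := μ.withDensity fun t => ENNReal.ofReal (ρ t)
  have hν : IsProbabilityMeasure ν := ⟨by
    rw [withDensity_apply _ .univ, Measure.restrict_univ,
      ← ofReal_integral_eq_lintegral_ofReal hρ (.of_forall hρ₀), hρ₁, ENNReal.ofReal_one]⟩
  have hac : ν ≪ μ := withDensity_absolutelyContinuous _ _
  have hfsub : AEMeasurable (fun z : G × G => ‖f (z.1 - z.2)‖ₑ ^ (p : ℝ)) (μ.prod ν) :=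
    (hf.comp_quasiMeasurePreserving
      (quasiMeasurePreserving_sub_of_right_invariant μ ν)).enorm.pow_const _
  have hjensen (x : G) :
      ‖(ρ ⋆[ContinuousLinearMap.lsmul ℝ ℝ, μ] f) x‖ₑ ^ (p : ℝ) ≤
        ∫⁻ t, ‖f (x - t)‖ₑ ^ (p : ℝ) ∂ν := by
    have hfx : AEMeasurable (fun t => ‖f (x - t)‖ₑ) μ := (hf.comp_quasiMeasurePreserving
      (quasiMeasurePreserving_sub_left_of_right_invariant μ x)).enorm
    refine le_trans ?_ (rpow_lintegral_le_lintegral_rpow (hfx.mono_ac hac) hp')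
    gcongr
    refine (enorm_integral_le_lintegral_enorm _).trans_eq ?_
    rw [lintegral_withDensity_eq_lintegral_mul₀ hρm hfx]
    simp [enorm_smul, Real.enorm_of_nonneg (hρ₀ _)]
  have hp₀ : (p : ℝ≥0∞) ≠ 0 := mod_cast (zero_lt_one.trans_le hp).ne'
  simp only [eLpNorm_eq_lintegral_rpow_enorm_toReal hp₀ ENNReal.coe_ne_top, ENNReal.coe_toReal]
  gcongr ?_ ^ _
  calc ∫⁻ x, ‖(ρ ⋆[ContinuousLinearMap.lsmul ℝ ℝ, μ] f) x‖ₑ ^ (p : ℝ) ∂μ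
      ≤ ∫⁻ x, ∫⁻ t, ‖f (x - t)‖ₑ ^ (p : ℝ) ∂ν ∂μ := lintegral_mono hjensen
    _ = ∫⁻ t, ∫⁻ x, ‖f (x - t)‖ₑ ^ (p : ℝ) ∂μ ∂ν := lintegral_lintegral_swap hfsub
    _ = ∫⁻ x, ‖f x‖ₑ ^ (p : ℝ) ∂μ := by
        simp [lintegral_sub_right_eq_self fun x => ‖f x‖ₑ ^ (p : ℝ)]

variable {E F : Type*} [NormedAddCommGroup E] [NormedSpace ℝ E] [MeasurableSpace E]
  [NormedAddCommGroup F] [NormedSpace ℝ F] {μ : Measure E} {U V : Set E} {w : E → F}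
  {dw : E → E →L[ℝ] F}

/-- `dw` is the weak (distributional) derivative of `w` on `U`: integration by parts against smooth
functions with compact support in `U` holds. As the Bochner integral of a non-integrable function
is `0`, the notion is meaningful only for locally integrable `w` and `dw`. -/
def HasWeakFDerivOn (μ : Measure E) (w : E → F) (dw : E → E →L[ℝ] F) (U : Set E) : Prop :=
  ∀ φ : E → ℝ, ContDiff ℝ (⊤ : ℕ∞) φ → HasCompactSupport φ → tsupport φ ⊆ U → ∀ e : E,
    ∫ x in U, φ x • dw x e ∂μ = -∫ x in U, fderiv ℝ φ x e • w x ∂μ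

theorem HasWeakFDerivOn.mono (h : HasWeakFDerivOn μ w dw U) (hU : MeasurableSet U) (hVU : V ⊆ U) :
    HasWeakFDerivOn μ w dw V := by
  intro φ hφ hφc hφV e
  rw [← setIntegral_eq_of_subset_of_forall_sdiff_eq_zero hU hVU fun x hx => ?_,
    ← setIntegral_eq_of_subset_of_forall_sdiff_eq_zero hU hVU fun x hx => ?_]
  · exact h φ hφ hφc (hφV.trans hVU) e
  · rw [fderiv_of_notMem_tsupport ℝ fun hxφ => hx.2 (hφV hxφ), zero_apply, zero_smul]
  · rw [image_eq_zero_of_notMem_tsupport fun hxφ => hx.2 (hφV hxφ), zero_smul]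

variable [BorelSpace E] [FiniteDimensional ℝ E] [μ.IsAddHaarMeasure]

theorem HasWeakFDerivOn.fderiv_convolution_indicator (h : HasWeakFDerivOn μ w dw U)
    (hU : MeasurableSet U) (hw : IntegrableOn w U μ) (hdw : IntegrableOn dw U μ) {ρ : E → ℝ}
    (hρ : ContDiff ℝ (⊤ : ℕ∞) ρ) (hρc : HasCompactSupport ρ) {x : E}
    (hx : (x - ·) ⁻¹' tsupport ρ ⊆ U) :
    fderiv ℝ (ρ ⋆[ContinuousLinearMap.lsmul ℝ ℝ, μ] U.indicator w) x =
      (ρ ⋆[ContinuousLinearMap.lsmul ℝ ℝ, μ] U.indicator dw) x := by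
  have hρ₁ : ContDiff ℝ 1 ρ := hρ.of_le (mod_cast le_top)
  have hwl := (hw.integrable_indicator hU).locallyIntegrable
  have hdwl := (hdw.integrable_indicator (ε' := E →L[ℝ] F) hU).locallyIntegrable
  rw [(hρc.hasFDerivAt_convolution_left (ContinuousLinearMap.lsmul ℝ ℝ) hρ₁ hwl x).fderiv]
  ext e
  have hweak := h (fun y => ρ (x - y)) (hρ.comp (contDiff_const.sub contDiff_id))
    (hρc.comp_homeomorph (Homeomorph.subLeft x))
    ((tsupport_comp_subset_preimage ρ (by fun_prop : Continuous (x - ·))).trans hx) e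
  have hfderiv (y : E) : fderiv ℝ (fun y => ρ (x - y)) y e = -fderiv ℝ ρ (x - y) e := by
    have hcomp : HasFDerivAt (fun y => ρ (x - y)) _ y :=
      (hρ₁.differentiable one_ne_zero (x - y)).hasFDerivAt.comp y ((hasFDerivAt_id y).const_sub x)
    simp [hcomp.fderiv]
  have hconv : ConvolutionExistsAt ρ (U.indicator dw) x (ContinuousLinearMap.lsmul ℝ ℝ) μ :=
    hρc.convolutionExists_left _ hρ₁.continuous hdwl x
  have hconv' : ConvolutionExistsAt (fderiv ℝ ρ) (U.indicator w) x
      ((ContinuousLinearMap.lsmul ℝ ℝ).precompL E) μ :=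
    (hρc.fderiv ℝ).convolutionExists_left _ (hρ₁.continuous_fderiv one_ne_zero) hwl x
  rw [convolution_eq_swap, convolution_eq_swap,
    ContinuousLinearMap.integral_apply hconv'.integrable_swap,
    ContinuousLinearMap.integral_apply hconv.integrable_swap]
  calc ∫ y, (ContinuousLinearMap.lsmul ℝ ℝ).precompL E (fderiv ℝ ρ (x - y)) (U.indicator w y) e ∂μ
      = ∫ y in U, fderiv ℝ ρ (x - y) e • w y ∂μ := by
        rw [← integral_indicator hU]
        congr with y
        by_cases hy : y ∈ U <;> simp [hy, ContinuousLinearMap.precompL_apply]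
    _ = ∫ y in U, ρ (x - y) • dw y e ∂μ := by simp [hweak, hfderiv, integral_neg]
    _ = _ := by
        rw [← integral_indicator hU]
        congr with y
        by_cases hy : y ∈ U <;> simp [hy]

theorem eLpNorm_normed_convolution_indicator_le (b : ContDiffBump (0 : E)) (hU : MeasurableSet U)
    {f : E → F} (hf : AEStronglyMeasurable f (μ.restrict U)) {p : ℝ≥0} (hp : 1 ≤ p) :
    eLpNorm (b.normed μ ⋆[ContinuousLinearMap.lsmul ℝ ℝ, μ] U.indicator f) p μ ≤
      eLpNorm f p (μ.restrict U) := by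
  rw [← eLpNorm_indicator_eq_eLpNorm_restrict hU]
  exact eLpNorm_convolution_le b.integrable_normed b.nonneg_normed b.integral_normed
    ((aestronglyMeasurable_indicator_iff hU).2 hf) hp

theorem HasWeakFDerivOn.exists_contDiff_tendsto [CompleteSpace F] (h : HasWeakFDerivOn μ w dw U)
    (hU : MeasurableSet U) (hw : IntegrableOn w U μ) (hdw : IntegrableOn dw U μ)
    {K : Set E} (hK : MeasurableSet K) {δ : ℝ} (hδ : 0 < δ) (hKU : thickening δ K ⊆ U)
    {p : ℝ≥0} (hp : 1 ≤ p) :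
    ∃ u : ℕ → E → F, (∀ n, ContDiff ℝ 1 (u n)) ∧
      (∀ᵐ x ∂μ.restrict K, Tendsto (u · x) atTop (𝓝 (w x))) ∧
      (∀ n, eLpNorm (u n) p (μ.restrict K) ≤ eLpNorm w p (μ.restrict U)) ∧
      ∀ n, eLpNorm (fderiv ℝ (u n)) p (μ.restrict K) ≤ eLpNorm dw p (μ.restrict U) := by
  let bump (n : ℕ) : ContDiffBump (0 : E) :=
    { rIn := δ / (n + 2) / 2
      rOut := δ / (n + 2)
      rIn_pos := by positivity
      rIn_lt_rOut := half_lt_self (by positivity) }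
  have hw' := hw.integrable_indicator hU
  have hKU' : K ⊆ U := (self_subset_thickening hδ K).trans hKU
  refine ⟨fun n => (bump n).normed μ ⋆[ContinuousLinearMap.lsmul ℝ ℝ, μ] U.indicator w,
    fun n => ?_, ?_, fun n => ?_, fun n => ?_⟩
  · exact (bump n).hasCompactSupport_normed.contDiff_convolution_left _
      (bump n).contDiff_normed hw'.locallyIntegrable
  · have hlim : Tendsto (fun n => (bump n).rOut) atTop (𝓝 0) :=
      tendsto_const_nhds.div_atTop
        (tendsto_atTop_add_const_right _ _ tendsto_natCast_atTop_atTop)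
    have hrad (n : ℕ) : (bump n).rOut ≤ 2 * (bump n).rIn := (mul_div_cancel₀ _ two_ne_zero).ge
    filter_upwards [ae_restrict_of_ae
      (ContDiffBump.ae_convolution_tendsto_right_of_locallyIntegrable hlim (.of_forall hrad)
        hw'.locallyIntegrable), ae_restrict_mem hK] with x hx hxK
    rwa [indicator_of_mem (hKU' hxK)] at hx
  · exact (eLpNorm_restrict_le _ _ _ _).trans
      (eLpNorm_normed_convolution_indicator_le (bump n) hU hw.1 hp)
  · refine (eLpNorm_congr_ae ?_).le.trans ((eLpNorm_restrict_le _ _ _ _).trans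
      (eLpNorm_normed_convolution_indicator_le (bump n) hU hdw.1 hp))
    filter_upwards [ae_restrict_mem hK] with x hx
    refine h.fderiv_convolution_indicator hU hw hdw (bump n).contDiff_normed
      (bump n).hasCompactSupport_normed fun y hy => hKU (mem_thickening_iff.2 ⟨x, hx, ?_⟩)
    rw [mem_preimage, (bump n).tsupport_normed_eq, mem_closedBall_zero_iff, ← dist_eq_norm] at hy
    rw [dist_comm]
    refine hy.trans_lt (div_lt_self hδ ?_)
    linarith [n.cast_nonneg (α := ℝ)]

theorem HasWeakFDerivOn.eLpNorm_le_of_forall_contDiff [CompleteSpace F]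
    (h : HasWeakFDerivOn μ w dw U) (hU : MeasurableSet U) (hw : IntegrableOn w U μ)
    (hdw : IntegrableOn dw U μ) {K : Set E} (hK : MeasurableSet K) (hVK : V ⊆ K) {δ : ℝ}
    (hδ : 0 < δ) (hKU : thickening δ K ⊆ U) {p : ℝ≥0} (hp : 1 ≤ p) {q c₁ c₂ : ℝ≥0∞}
    (hsmooth : ∀ u : E → F, ContDiff ℝ 1 u → eLpNorm u q (μ.restrict V) ≤
      c₁ * eLpNorm (fderiv ℝ u) p (μ.restrict K) + c₂ * eLpNorm u p (μ.restrict K)) :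
    eLpNorm w q (μ.restrict V) ≤
      c₁ * eLpNorm dw p (μ.restrict U) + c₂ * eLpNorm w p (μ.restrict U) := by
  obtain ⟨u, hu, hlim, hle, hle'⟩ := h.exists_contDiff_tendsto hU hw hdw hK hδ hKU hp
  calc eLpNorm w q (μ.restrict V)
      ≤ liminf (fun n => eLpNorm (u n) q (μ.restrict V)) atTop :=
        Lp.eLpNorm_lim_le_liminf_eLpNorm (fun n => (hu n).continuous.aestronglyMeasurable) w
          (ae_restrict_of_ae_restrict_of_subset hVK hlim)
    _ ≤ liminf (fun _ : ℕ => c₁ * eLpNorm dw p (μ.restrict U) +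
          c₂ * eLpNorm w p (μ.restrict U)) atTop := by
        refine liminf_le_liminf (.of_forall fun n => (hsmooth (u n) (hu n)).trans ?_)
        gcongr
        exacts [hle' n, hle n]
    _ = _ := liminf_const _

end Mollification

section WeakSobolevPoincare

variable {E F : Type*} [NormedAddCommGroup E] [InnerProductSpace ℝ E] [FiniteDimensional ℝ E]
  [MeasurableSpace E] [BorelSpace E] (μ : Measure E) [μ.IsAddHaarMeasure]
  [NormedAddCommGroup F] [InnerProductSpace ℝ F] [CompleteSpace F]

theorem exists_eLpNorm_ball_mul_le_of_hasWeakFDerivOn {p q : ℝ≥0} (hp : 1 < p)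
    (hpn : p < Module.finrank ℝ E) (hq : (q : ℝ)⁻¹ = (p : ℝ)⁻¹ - (Module.finrank ℝ E : ℝ)⁻¹) :
    ∃ C : ℝ≥0, ∀ (w : E → F) (dw : E → E →L[ℝ] F) (R θ : ℝ), 0 < R → 0 < θ → θ ≤ 1 →
      HasWeakFDerivOn μ w dw (ball 0 R) → IntegrableOn w (ball 0 R) μ →
      IntegrableOn dw (ball 0 R) μ →
      eLpNorm w q (μ.restrict (ball 0 (θ * R))) ≤
        C * (eLpNorm dw p (μ.restrict (ball 0 R)) +
          ENNReal.ofReal (θ ^ (Module.finrank ℝ E / q : ℝ) * R⁻¹) *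
            eLpNorm w p (μ.restrict (ball 0 R))) := by
  obtain ⟨C, hC⟩ := exists_eLpNorm_ball_mul_le (F := F) μ hp hpn hq
  refine ⟨2 * C, fun w dw R θ hR hθ hθ₁ h hw hdw => ?_⟩
  set D := eLpNorm dw p (μ.restrict (ball 0 R))
  set W := eLpNorm w p (μ.restrict (ball 0 R))
  have hθR : θ * R ≤ R := by nlinarith
  refine eLpNorm_restrict_ball_le_of_eventually_le
    (hw.1.mono_measure (Measure.restrict_mono_set μ (ball_subset_ball hθR))) ?_
  have hnear : ∀ᶠ b in 𝓝[<] (θ * R), b ∈ Ioo (θ * (R / 2)) (θ * R) :=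
    Ioo_mem_nhdsLT (by nlinarith)
  filter_upwards [hnear] with b hb
  obtain ⟨a, rfl⟩ : ∃ a, b = θ * a := ⟨b / θ, (mul_div_cancel₀ b hθ.ne').symm⟩
  have haR : a < R := lt_of_mul_lt_mul_left hb.2 hθ.le
  have hRa : R / 2 < a := lt_of_mul_lt_mul_left hb.1 hθ.le
  have ha : 0 < a := by linarith
  have hweak : eLpNorm w q (μ.restrict (ball 0 (θ * a))) ≤
      C * D + C * ENNReal.ofReal (θ ^ (Module.finrank ℝ E / q : ℝ) * a⁻¹) * W := by
    refine h.eLpNorm_le_of_forall_contDiff measurableSet_ball hw hdw measurableSet_ball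
      (ball_subset_ball (by nlinarith : θ * a ≤ a)) (sub_pos.2 haR) ?_ hp.le fun u hu => ?_
    · rw [thickening_ball (sub_pos.2 haR) ha, sub_add_cancel]
    · simpa only [mul_add, mul_assoc] using hC u hu a θ ha hθ hθ₁
  have hinv : a⁻¹ ≤ 2 * R⁻¹ := by
    rw [← inv_inv (2 : ℝ), ← mul_inv]
    exact inv_anti₀ (by positivity) (by linarith)
  calc eLpNorm w q (μ.restrict (ball 0 (θ * a)))
      ≤ C * D + C * ENNReal.ofReal (θ ^ (Module.finrank ℝ E / q : ℝ) * a⁻¹) * W := hweak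
    _ ≤ C * (2 * D) +
          C * ENNReal.ofReal (θ ^ (Module.finrank ℝ E / q : ℝ) * (2 * R⁻¹)) * W := by
        gcongr
        exact le_mul_of_one_le_left zero_le one_le_two
    _ = _ := by
        rw [mul_left_comm (θ ^ _) 2, ENNReal.ofReal_mul zero_le_two, ENNReal.ofReal_ofNat]
        push_cast
        ring

end WeakSobolevPoincare

section SobolevPoincareThree

theorem lpNorm_pow_eq_integral_norm_pow {α F : Type*} [MeasurableSpace α] {μ : Measure α}
    [NormedAddCommGroup F] {f : α → F} (hf : AEStronglyMeasurable f μ) {n : ℕ} (hn : n ≠ 0) :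
    lpNorm f n μ ^ n = ∫ x, ‖f x‖ ^ n ∂μ := by
  have hint : 0 ≤ ∫ x, ‖f x‖ ^ n ∂μ := integral_nonneg fun x => by positivity
  rw [lpNorm_eq_integral_norm_rpow_toReal (mod_cast hn) (ENNReal.natCast_ne_top n) hf]
  simp only [ENNReal.toReal_natCast, Real.rpow_natCast]
  exact Real.rpow_inv_natCast_pow hint hn

variable {E F : Type*} [NormedAddCommGroup E] [InnerProductSpace ℝ E] [FiniteDimensional ℝ E]
  [MeasurableSpace E] [BorelSpace E] (μ : Measure E) [μ.IsAddHaarMeasure]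
  [NormedAddCommGroup F] [InnerProductSpace ℝ F] [CompleteSpace F]

theorem exists_lpNorm_six_ball_mul_le (hE : Module.finrank ℝ E = 3) :
    ∃ C : ℝ, 0 < C ∧ ∀ (w : E → F) (dw : E → E →L[ℝ] F) (R θ : ℝ), 0 < R → 0 < θ → θ ≤ 1 →
      HasWeakFDerivOn μ w dw (ball 0 R) → MemLp w 2 (μ.restrict (ball 0 R)) →
      MemLp dw 2 (μ.restrict (ball 0 R)) →
      lpNorm w 6 (μ.restrict (ball 0 (θ * R))) ≤
        C * (lpNorm dw 2 (μ.restrict (ball 0 R)) +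
          √θ * R⁻¹ * lpNorm w 2 (μ.restrict (ball 0 R))) := by
  obtain ⟨C, hC⟩ := exists_eLpNorm_ball_mul_le_of_hasWeakFDerivOn (F := F) μ (p := 2) (q := 6)
    one_lt_two (by rw [hE]; norm_num) (by rw [hE]; norm_num)
  refine ⟨C + 1, by positivity, fun w dw R θ hR hθ hθ₁ h hw hdw => ?_⟩
  have hfinite : IsFiniteMeasure (μ.restrict (ball 0 R)) :=
    isFiniteMeasure_restrict.2 measure_ball_lt_top.ne
  have hle := hC w dw R θ hR hθ hθ₁ h (hw.integrable one_le_two) (hdw.integrable one_le_two)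
  have hexp : θ ^ ((Module.finrank ℝ E : ℝ) / ((6 : ℝ≥0) : ℝ)) = √θ := by
    rw [hE, Real.sqrt_eq_rpow]
    norm_num
  have hnonneg : 0 ≤ lpNorm dw 2 (μ.restrict (ball 0 R)) := lpNorm_nonneg
  have hnonneg' : 0 ≤ lpNorm w 2 (μ.restrict (ball 0 R)) := lpNorm_nonneg
  rw [hexp, ENNReal.coe_ofNat, ENNReal.coe_ofNat, ← ofReal_lpNorm hw, ← ofReal_lpNorm hdw,
    ← ENNReal.ofReal_coe_nnreal, ← ENNReal.ofReal_mul (by positivity),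
    ← ENNReal.ofReal_add hnonneg (by positivity), ← ENNReal.ofReal_mul C.coe_nonneg] at hle
  rw [← toReal_eLpNorm
    (hw.1.mono_measure (Measure.restrict_mono_set μ (ball_subset_ball (by nlinarith))))]
  refine (ENNReal.toReal_le_of_le_ofReal (by positivity) hle).trans ?_
  gcongr
  linarith

theorem exists_rpow_integral_norm_pow_six_le (hE : Module.finrank ℝ E = 3) :
    ∃ C : ℝ, 0 < C ∧ ∀ (w : E → F) (dw : E → E →L[ℝ] F) (R θ : ℝ), 0 < R → 0 < θ → θ ≤ 1 →
      HasWeakFDerivOn μ w dw (ball 0 R) → MemLp w 2 (μ.restrict (ball 0 R)) →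
      MemLp dw 2 (μ.restrict (ball 0 R)) →
      (∫ x in ball 0 (θ * R), ‖w x‖ ^ 6 ∂μ) ^ ((1 : ℝ) / 3) ≤
        C * ((∫ x in ball 0 R, ‖dw x‖ ^ 2 ∂μ) +
          θ * R⁻¹ ^ 2 * ∫ x in ball 0 R, ‖w x‖ ^ 2 ∂μ) := by
  obtain ⟨C, hC₀, hC⟩ := exists_lpNorm_six_ball_mul_le (F := F) μ hE
  refine ⟨2 * C ^ 2, by positivity, fun w dw R θ hR hθ hθ₁ h hw hdw => ?_⟩
  have hwθ : AEStronglyMeasurable w (μ.restrict (ball 0 (θ * R))) :=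
    hw.1.mono_measure (Measure.restrict_mono_set μ (ball_subset_ball (by nlinarith)))
  set D := lpNorm dw 2 (μ.restrict (ball 0 R))
  set W := lpNorm w 2 (μ.restrict (ball 0 R))
  have hD : D ^ 2 = ∫ x in ball 0 R, ‖dw x‖ ^ 2 ∂μ :=
    lpNorm_pow_eq_integral_norm_pow hdw.1 two_ne_zero
  have hW : W ^ 2 = ∫ x in ball 0 R, ‖w x‖ ^ 2 ∂μ :=
    lpNorm_pow_eq_integral_norm_pow hw.1 two_ne_zero
  have hsix : lpNorm w 6 (μ.restrict (ball 0 (θ * R))) ^ 6 = ∫ x in ball 0 (θ * R), ‖w x‖ ^ 6 ∂μ :=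
    lpNorm_pow_eq_integral_norm_pow hwθ (by norm_num)
  calc (∫ x in ball 0 (θ * R), ‖w x‖ ^ 6 ∂μ) ^ ((1 : ℝ) / 3)
      = lpNorm w 6 (μ.restrict (ball 0 (θ * R))) ^ 2 := by
        rw [← hsix, ← Real.rpow_natCast_mul lpNorm_nonneg, ← Real.rpow_natCast]
        norm_num
    _ ≤ (C * (D + √θ * R⁻¹ * W)) ^ 2 := by
        gcongr
        · exact lpNorm_nonneg
        · exact hC w dw R θ hR hθ hθ₁ h hw hdw
    _ ≤ C ^ 2 * (2 * (D ^ 2 + (√θ * R⁻¹ * W) ^ 2)) := by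
        rw [mul_pow]
        gcongr
        exact add_sq_le
    _ = 2 * C ^ 2 * (D ^ 2 + θ * R⁻¹ ^ 2 * W ^ 2) := by
        rw [mul_pow, mul_pow, Real.sq_sqrt hθ.le]
        ring
    _ = _ := by rw [hD, hW]

end SobolevPoincareThree

section GradientSlices

theorem sq_opNorm_le_sum_sq_norm_orthonormalBasis {ι E F : Type*} [Fintype ι]
    [NormedAddCommGroup E] [InnerProductSpace ℝ E] [SeminormedAddCommGroup F] [NormedSpace ℝ F]
    (b : OrthonormalBasis ι ℝ E) (A : E →L[ℝ] F) : ‖A‖ ^ 2 ≤ ∑ i, ‖A (b i)‖ ^ 2 := by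
  have hsum : 0 ≤ ∑ i, ‖A (b i)‖ ^ 2 := Finset.sum_nonneg fun i _ => sq_nonneg _
  refine (Real.le_sqrt (norm_nonneg A) hsum).1 (A.opNorm_le_bound (Real.sqrt_nonneg _) fun x => ?_)
  have hx : ‖x‖ = √(∑ i, ‖b.repr x i‖ ^ 2) := by
    rw [← EuclideanSpace.norm_eq, b.repr.norm_map]
  calc ‖A x‖ = ‖∑ i, b.repr x i • A (b i)‖ := by
        simp only [← map_smul, ← map_sum, b.sum_repr]
    _ ≤ ∑ i, ‖A (b i)‖ * ‖b.repr x i‖ :=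
        (norm_sum_le _ _).trans_eq (by simp only [norm_smul, mul_comm])
    _ ≤ √(∑ i, ‖A (b i)‖ ^ 2) * ‖x‖ := by
        rw [hx]
        exact Real.sum_mul_le_sqrt_mul_sqrt _ _ _

theorem fnormSq_nonneg (A : V3 →L[ℝ] V3) : 0 ≤ fnormSq A :=
  Finset.sum_nonneg fun _ _ => sq_nonneg _

theorem norm_sq_le_fnormSq (A : V3 →L[ℝ] V3) : ‖A‖ ^ 2 ≤ fnormSq A := by
  simpa only [fnormSq, e3, EuclideanSpace.basisFun_apply] using
    sq_opNorm_le_sum_sq_norm_orthonormalBasis (EuclideanSpace.basisFun (Fin 3) ℝ) A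

theorem exists_rpow_integral_norm_pow_six_le_fnormSq :
    ∃ C : ℝ, 0 < C ∧ ∀ (w : V3 → V3) (dw : V3 → V3 →L[ℝ] V3) (R θ : ℝ), 0 < R → 0 < θ → θ ≤ 1 →
      HasWeakFDerivOn volume w dw (ball 0 R) →
      AEStronglyMeasurable w (volume.restrict (ball 0 R)) →
      AEStronglyMeasurable dw (volume.restrict (ball 0 R)) →
      IntegrableOn (fun x => ‖w x‖ ^ 2) (ball 0 R) →
      IntegrableOn (fun x => fnormSq (dw x)) (ball 0 R) →
      (∫ x in ball 0 (θ * R), ‖w x‖ ^ 6) ^ ((1 : ℝ) / 3) ≤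
        C * ((∫ x in ball 0 R, fnormSq (dw x)) + θ * R⁻¹ ^ 2 * ∫ x in ball 0 R, ‖w x‖ ^ 2) := by
  obtain ⟨C, hC₀, hC⟩ := exists_rpow_integral_norm_pow_six_le (E := V3) (F := V3) volume
    finrank_euclideanSpace_fin
  refine ⟨C, hC₀, fun w dw R θ hR hθ hθ₁ h hwm hdwm hw hdw => ?_⟩
  have hdw' : IntegrableOn (fun x => ‖dw x‖ ^ 2) (ball 0 R) :=
    hdw.mono' (hdwm.norm.pow 2) (.of_forall fun x => by
      simpa using norm_sq_le_fnormSq (dw x))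
  refine (hC w dw R θ hR hθ hθ₁ h ((memLp_two_iff_integrable_sq_norm hwm).2 hw)
    ((memLp_two_iff_integrable_sq_norm hdwm).2 hdw')).trans ?_
  gcongr ?_ * (?_ + _)
  exact integral_mono hdw' hdw fun x => norm_sq_le_fnormSq (dw x)

end GradientSlices

section TimeIntegration

theorem ae_aestronglyMeasurable_slice {α β F : Type*} [MeasurableSpace α] [MeasurableSpace β]
    [TopologicalSpace F] {μ : Measure α} {ν : Measure β} [SFinite μ] [SFinite ν] {S : Set α}
    {T : Set β} {f : α → β → F}
    (hf : AEStronglyMeasurable (fun z : α × β => f z.1 z.2) ((μ.prod ν).restrict (S ×ˢ T))) :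
    ∀ᵐ t ∂ν.restrict T, AEStronglyMeasurable (f · t) (μ.restrict S) := by
  rw [← Measure.prod_restrict] at hf
  exact hf.prod_swap.prodMk_left

theorem setIntegral_Ioo_le_of_ae_le_mul_add_const {f g : ℝ → ℝ} {a b c C M : ℝ} (hab : a ≤ b)
    (hbc : b ≤ c) (hC : 0 ≤ C) (hf : 0 ≤ f) (hg : 0 ≤ g) (hgi : IntegrableOn g (Ioo a c))
    (hfg : ∀ᵐ t ∂volume.restrict (Ioo b c), f t ≤ C * (g t + M)) :
    ∫ t in Ioo b c, f t ≤ C * ((∫ t in Ioo a c, g t) + (c - b) * M) := by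
  have hsub : Ioo b c ⊆ Ioo a c := Ioo_subset_Ioo_left hab
  have hgi' : IntegrableOn g (Ioo b c) := hgi.mono_set hsub
  have hM : IntegrableOn (fun _ : ℝ => M) (Ioo b c) := integrableOn_const measure_Ioo_lt_top.ne
  calc ∫ t in Ioo b c, f t
      ≤ ∫ t in Ioo b c, C * (g t + M) :=
        integral_mono_of_nonneg (.of_forall hf) ((hgi'.add hM).const_mul C) hfg
    _ = C * ((∫ t in Ioo b c, g t) + (c - b) * M) := by
        rw [integral_const_mul, integral_add hgi' hM, setIntegral_const,
          Real.volume_real_Ioo_of_le hbc, smul_eq_mul]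
    _ ≤ C * ((∫ t in Ioo a c, g t) + (c - b) * M) := by
        gcongr ?_ * (?_ + _)
        exact setIntegral_mono_set hgi (.of_forall hg) hsub.eventuallyLE

theorem integral_norm_sq_le_mul_funA {v : V3 → ℝ → V3} {r s : ℝ} (hr : 0 < r)
    (hv : BddAbove ((fun s => ∫ x in ball 0 r, ‖v x s‖ ^ 2) '' Ioo (-r ^ 2) 0))
    (hs : s ∈ Ioo (-r ^ 2) 0) :
    ∫ x in ball 0 r, ‖v x s‖ ^ 2 ≤ r * funA v r := by
  rw [funA, mul_inv_cancel_left₀ hr.ne']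
  exact le_csSup hv ⟨s, hs, rfl⟩

theorem exists_funG_mul_le :
    ∃ C : ℝ, 0 < C ∧ ∀ (v : V3 → ℝ → V3) (dv : V3 → ℝ → V3 →L[ℝ] V3) (r θ : ℝ),
      0 < r → 0 < θ → θ ≤ 1 →
      AEMeasurable (fun z : V3 × ℝ => v z.1 z.2)
        (volume.restrict (ball 0 r ×ˢ Ioo (-r ^ 2) 0)) →
      AEMeasurable (fun z : V3 × ℝ => dv z.1 z.2)
        (volume.restrict (ball 0 r ×ˢ Ioo (-r ^ 2) 0)) →
      (∀ s ∈ Ioo (-r ^ 2) 0, IntegrableOn (fun x => ‖v x s‖ ^ 2) (ball 0 r)) →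
      BddAbove ((fun s => ∫ x in ball 0 r, ‖v x s‖ ^ 2) '' Ioo (-r ^ 2) 0) →
      (∀ᵐ t ∂volume.restrict (Ioo (-r ^ 2) 0),
        HasWeakFDerivOn volume (v · t) (dv · t) (ball 0 r)) →
      IntegrableOn (fun z : V3 × ℝ => fnormSq (dv z.1 z.2)) (ball 0 r ×ˢ Ioo (-r ^ 2) 0) →
      funG v (θ * r) ≤ C * (θ⁻¹ * funE dv r + θ ^ 2 * funA v r) := by
  obtain ⟨C, hC₀, hC⟩ := exists_rpow_integral_norm_pow_six_le_fnormSq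
  refine ⟨C, hC₀, fun v dv r θ hr hθ hθ₁ hvm hdvm hv hbdd hweak hdv => ?_⟩
  have htime : -r ^ 2 ≤ -(θ * r) ^ 2 := by
    have : (θ * r) ^ 2 ≤ r ^ 2 := by gcongr; nlinarith
    linarith
  rw [IntegrableOn, Measure.volume_eq_prod, ← Measure.prod_restrict] at hdv
  have hslice : ∀ᵐ t ∂volume.restrict (Ioo (-r ^ 2) 0),
      (∫ x in ball 0 (θ * r), ‖v x t‖ ^ 6) ^ ((1 : ℝ) / 3) ≤
        C * ((∫ x in ball 0 r, fnormSq (dv x t)) + θ * r⁻¹ ^ 2 * (r * funA v r)) := by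
    filter_upwards [ae_aestronglyMeasurable_slice hvm.aestronglyMeasurable,
      ae_aestronglyMeasurable_slice hdvm.aestronglyMeasurable, hdv.prod_left_ae, hweak,
      ae_restrict_mem measurableSet_Ioo] with t hvt hdvt hdvt' hweakt ht
    refine (hC _ _ r θ hr hθ hθ₁ hweakt hvt hdvt (hv t ht) hdvt').trans ?_
    gcongr
    exact integral_norm_sq_le_mul_funA hr hbdd ht
  have hG := setIntegral_Ioo_le_of_ae_le_mul_add_const htime (by nlinarith) hC₀.le
    (fun t => by positivity) (fun t => integral_nonneg fun x => fnormSq_nonneg _)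
    hdv.integral_prod_right
    (ae_restrict_of_ae_restrict_of_subset (Ioo_subset_Ioo_left htime) hslice)
  calc funG v (θ * r)
      ≤ (θ * r)⁻¹ * (C * ((∫ t in Ioo (-r ^ 2) 0, ∫ x in ball 0 r, fnormSq (dv x t)) +
          (0 - -(θ * r) ^ 2) * (θ * r⁻¹ ^ 2 * (r * funA v r)))) := by
        unfold funG
        gcongr
    _ = C * (θ⁻¹ * funE dv r + θ ^ 2 * funA v r) := by
        unfold funE
        field_simp
        ring

theorem IsWeakSpatialGradient.ae_hasWeakFDerivOn {U : Set V3} {I : Set ℝ} {v : V3 → ℝ → V3}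
    {dv : V3 → ℝ → V3 →L[ℝ] V3} (h : IsWeakSpatialGradient U I v dv) :
    ∀ᵐ t ∂volume.restrict I, HasWeakFDerivOn volume (v · t) (dv · t) U := by
  filter_upwards [h] with t ht φ hφ hφc hφU
  exact ht φ ⟨hφ, hφc, hφU⟩

end TimeIntegration

/-- interpolation inequality II. -/
theorem statement16 :
    ∃ c : ℝ, 0 < c ∧
      ∀ (v : V3 → ℝ → V3) (dv : V3 → ℝ → V3 →L[ℝ] V3),
        AEMeasurable (fun z : V3 × ℝ => v z.1 z.2)
          (volume.restrict (ball (0 : V3) 1 ×ˢ Ioo (-1 : ℝ) 0)) →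
        AEMeasurable (fun z : V3 × ℝ => dv z.1 z.2)
          (volume.restrict (ball (0 : V3) 1 ×ˢ Ioo (-1 : ℝ) 0)) →
        (∃ K : ℝ, ∀ s ∈ Ioo (-1 : ℝ) 0,
          IntegrableOn (fun x => ‖v x s‖ ^ 2) (ball (0 : V3) 1) volume ∧
          (∫ x in ball (0 : V3) 1, ‖v x s‖ ^ 2) ≤ K) →
        IsWeakSpatialGradient (ball (0 : V3) 1) (Ioo (-1 : ℝ) 0) v dv →
        IntegrableOn (fun z : V3 × ℝ => fnormSq (dv z.1 z.2))
          (ball (0 : V3) 1 ×ˢ Ioo (-1 : ℝ) 0) volume →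
        ∀ r θ : ℝ, 0 < r → r ≤ 1 → 0 < θ → θ ≤ 1 →
          funG v (θ*r) ≤ c * (θ⁻¹ * funE dv r + θ ^ 2 * funA v r) := by
  obtain ⟨C, hC₀, hC⟩ := exists_funG_mul_le
  refine ⟨C, hC₀, fun v dv hvm hdvm ⟨K, hK⟩ hweak hdv r θ hr hr₁ hθ hθ₁ => ?_⟩
  have hball : ball (0 : V3) r ⊆ ball 0 1 := ball_subset_ball hr₁
  have htime : Ioo (-r ^ 2) 0 ⊆ Ioo (-1 : ℝ) 0 := Ioo_subset_Ioo_left (by nlinarith)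
  have hcyl : ball (0 : V3) r ×ˢ Ioo (-r ^ 2) 0 ⊆ ball 0 1 ×ˢ Ioo (-1) 0 := prod_mono hball htime
  refine hC v dv r θ hr hθ hθ₁ (hvm.mono_set hcyl) (hdvm.mono_set hcyl)
    (fun s hs => (hK s (htime hs)).1.mono_set hball) ⟨K, ?_⟩ ?_ (hdv.mono_set hcyl)
  · rintro _ ⟨s, hs, rfl⟩
    obtain ⟨hint, hle⟩ := hK s (htime hs)
    exact (setIntegral_mono_set hint (.of_forall fun x => sq_nonneg _) hball.eventuallyLE).trans hle
  · filter_upwards [ae_restrict_of_ae_restrict_of_subset htime hweak.ae_hasWeakFDerivOn] with t ht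
    exact ht.mono measurableSet_ball hball

end
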